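/- arXiv:2209.15394 — 2 statements merged into one kernel-verified Lean document; each statement's English description precedes it below -/
import Mathlib

section
/- Let S be a simple closed curve and Q a countable dense subset of S. Let X be a Peano continuum having uncountably many local cut points that are not cut points of X. Then there is a continuous surjection p : X → S such that p^{-1}(y) is a continuum (in particular connected) for every y ∈ S, and p^{-1}(y) has more than one point if and only if y ∈ Q. -/
/-- `x` is a cut point of the connected space `X` if `X \ {x}` is not connected. -/
def IsCutPoint {X : Type*} [TopologicalSpace X] (x : X) : Prop :=
  ¬ IsPreconnected ({x}ᶜ : Set X)

/-- `x` is a local cut point of `X` if it has a connected neighborhood `U` such that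
`U \ {x}` is not connected. -/
def IsLocalCutPoint {X : Type*} [TopologicalSpace X] (x : X) : Prop :=
  ∃ U : Set X, U ∈ nhds x ∧ IsConnected U ∧ ¬ IsPreconnected (U \ {x})

/-!
Uncountably many local cut points of `X` are already cut points of a single connected open set `O`,
and uncountably many of those separate the same two points `a` and `b` in `O`. They are linearly
ordered along the way from `a` to `b`. As `X` is second countable, all but countably many of them
are accumulated from the left by the others, which yields a chain of such points that is ordered
like `ℚ` and confined to a relatively compact open subset of `O`.

Measuring the position of a point relative to the chain by a Dedekind cut gives a real coordinate on
the open region spanned by the chain. None of its points is a cut point of `X`, so the sets of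
points between two of them, and the complements of these sets, are connected; hence the map
`X → OnePoint ℝ` that sends the complement of the region to `∞` has connected fibers. Only countably
many fibers are nondegenerate, because such a fiber over a real number has nonempty interior.
Composing the coordinate with a monotone map `ℝ → ℝ` that collapses nondegenerate intervals exactly
over `Q`, and that maps the old nondegenerate fibers into `Q`, makes the nondegenerate fibers those
over `Q`.
-/

open Set Filter Topology

section Connectedness

variable {X ι : Type*} [TopologicalSpace X]

theorem isConnected_iInter_of_directed [T2Space X] [Nonempty ι] {K : ι → Set X}
    (hdir : Directed (· ⊇ ·) K) (hcomp : ∀ i, IsCompact (K i)) (hconn : ∀ i, IsConnected (K i)) :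
    IsConnected (⋂ i, K i) := by
  have hclosed : IsClosed (⋂ i, K i) := isClosed_iInter fun i => (hcomp i).isClosed
  have hcomp' : IsCompact (⋂ i, K i) :=
    (hcomp (Classical.arbitrary ι)).of_isClosed_subset hclosed (iInter_subset K _)
  refine ⟨IsCompact.nonempty_iInter_of_directed_nonempty_isCompact_isClosed K hdir
    (fun i => (hconn i).nonempty) hcomp fun i => (hcomp i).isClosed, ?_⟩
  rw [isPreconnected_iff_subset_of_fully_disjoint_closed hclosed]
  intro u v hu hv hcover hdisj
  obtain ⟨u', v', hu', hv', huu', hvv', hdisj'⟩ := SeparatedNhds.of_isCompact_isCompact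
    (hcomp'.inter_right hu) (hcomp'.inter_right hv)
    (hdisj.mono inter_subset_right inter_subset_right)
  have hsub : ⋂ i, K i ⊆ u' ∪ v' := fun x hx =>
    (hcover hx).imp (fun h => huu' ⟨hx, h⟩) fun h => hvv' ⟨hx, h⟩
  obtain ⟨i, hi⟩ := exists_subset_nhds_of_isCompact hdir hcomp
    fun x hx => (hu'.union hv').mem_nhds (hsub hx)
  rcases (hconn i).isPreconnected.subset_or_subset hu' hv' hdisj' hi with h | h
  · exact .inl fun x hx => (hcover hx).resolve_right fun hxv =>
      disjoint_left.1 hdisj' (h (mem_iInter.1 hx i)) (hvv' ⟨hx, hxv⟩)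
  · exact .inr fun x hx => (hcover hx).resolve_left fun hxu =>
      disjoint_left.1 hdisj' (huu' ⟨hx, hxu⟩) (h (mem_iInter.1 hx i))

theorem isPreconnected_insert_of_closure_inter_subset {Y N : Set X} {x : X}
    (hY : IsPreconnected Y) (hx : x ∈ Y) (hN : IsOpen N) (hNY : N ⊆ Y)
    (hcl : closure N ∩ Y ⊆ insert x N) : IsPreconnected (insert x N) := by
  rw [isPreconnected_iff_subset_of_disjoint]
  intro u v hu hv hcover hdisj
  have hdisj' : ∀ p ∈ insert x N, p ∈ u → p ∉ v := fun p hp hpu hpv =>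
    eq_empty_iff_forall_notMem.1 hdisj p ⟨hp, hpu, hpv⟩
  wlog hxu : x ∈ u generalizing u v
  · exact (this v u hv hu (by rwa [union_comm]) (by rwa [inter_comm v u])
      (fun p hp hpv hpu => hdisj' p hp hpu hpv)
      ((hcover (mem_insert x N)).resolve_left hxu)).symm
  have hxv : x ∉ v := hdisj' x (mem_insert x N) hxu
  -- `N ∩ v` is relatively clopen in `Y` and misses `x`, so it is empty.
  have hrel : closure (N ∩ v) ∩ Y ⊆ N ∩ v := by
    rintro q ⟨hq, hqY⟩
    have hqN : q ∈ insert x N := hcl ⟨closure_mono inter_subset_left hq, hqY⟩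
    have hqu : q ∉ u := fun hqu => by
      obtain ⟨p, hpu, hpN, hpv⟩ := mem_closure_iff.1 hq u hu hqu
      exact hdisj' p (mem_insert_of_mem x hpN) hpu hpv
    exact ⟨mem_of_mem_insert_of_ne hqN (fun h => hqu (h ▸ hxu)), (hcover hqN).resolve_left hqu⟩
  refine .inl fun p hp => (hcover hp).resolve_right fun hpv => hxv ?_
  have hpN : p ∈ N := mem_of_mem_insert_of_ne hp fun h => hxv (h ▸ hpv)
  exact (hY.subset_of_closure_inter_subset (hN.inter hv) ⟨p, hNY hpN, hpN, hpv⟩ hrel hx).2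

theorem isConnected_insert_insert_of_not_isCutPoint {N : Set X} {x y : X} (hx : ¬ IsCutPoint x)
    (hy : ¬ IsCutPoint y) (hxy : x ≠ y) (hN : IsOpen N) (hne : N.Nonempty) (hxN : x ∉ N)
    (hyN : y ∉ N) (hcl : closure N ⊆ insert x (insert y N)) :
    IsConnected (insert x (insert y N)) := by
  have hNx : IsPreconnected (insert x N) :=
    isPreconnected_insert_of_closure_inter_subset (not_not.1 hy) hxy hN
      (subset_compl_singleton_iff.2 hyN)
      fun q hq => (hcl hq.1).imp_right fun h => h.resolve_left hq.2
  have hNy : IsPreconnected (insert y N) :=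
    isPreconnected_insert_of_closure_inter_subset (not_not.1 hx) hxy.symm hN
      (subset_compl_singleton_iff.2 hxN) fun q hq => (hcl hq.1).resolve_left hq.2
  obtain ⟨p, hp⟩ := hne
  have hunion := hNx.union p (mem_insert_of_mem x hp) (mem_insert_of_mem y hp) hNy
  rw [insert_union, union_eq_right.2 (subset_insert y N)] at hunion
  exact ⟨⟨x, mem_insert _ _⟩, hunion⟩

end Connectedness

section OnePointExtension

variable {X Y : Type*}

open Classical in
/-- The extension of `g : R → Y` to a map from the whole space to the one-point compactification
of `Y` that sends the complement of `R` to `∞`. Only the values of `g` on `R` matter. -/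
noncomputable def extendInfty (R : Set X) (g : X → Y) (x : X) : OnePoint Y :=
  if x ∈ R then (g x : OnePoint Y) else OnePoint.infty

theorem extendInfty_preimage_infty (R : Set X) (g : X → Y) :
    extendInfty R g ⁻¹' {OnePoint.infty} = Rᶜ := by
  ext x
  by_cases hx : x ∈ R <;> simp [extendInfty, hx]

theorem extendInfty_preimage_of_infty_notMem (R : Set X) (g : X → Y) {T : Set (OnePoint Y)}
    (hT : OnePoint.infty ∉ T) : extendInfty R g ⁻¹' T = R ∩ g ⁻¹' ((↑) ⁻¹' T) := by
  ext x
  by_cases hx : x ∈ R <;> simp [extendInfty, hx, hT]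

theorem extendInfty_preimage_coe (R : Set X) (g : X → Y) (y : Y) :
    extendInfty R g ⁻¹' {(y : OnePoint Y)} = R ∩ g ⁻¹' {y} := by
  rw [extendInfty_preimage_of_infty_notMem R g (OnePoint.infty_ne_coe y),
    ← image_singleton, OnePoint.coe_injective.preimage_image]

theorem continuous_extendInfty [TopologicalSpace X] [TopologicalSpace Y] {R : Set X} {g : X → Y}
    (hR : IsOpen R) (hg : ContinuousOn g R)
    (hproper : ∀ K, IsClosed K → IsCompact K → IsClosed (R ∩ g ⁻¹' K)) :
    Continuous (extendInfty R g) := by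
  refine continuous_def.2 fun T hT => ?_
  by_cases hi : OnePoint.infty ∈ T
  · rw [← isClosed_compl_iff, ← preimage_compl,
      extendInfty_preimage_of_infty_notMem R g (not_not.2 hi), preimage_compl]
    obtain ⟨hclosed, hcomp⟩ := (OnePoint.isOpen_iff_of_mem hi).1 hT
    exact hproper _ hclosed hcomp
  · rw [extendInfty_preimage_of_infty_notMem R g hi]
    exact hg.isOpen_inter_preimage hR (hT.preimage OnePoint.continuous_coe)

theorem nonempty_homeomorph_onePoint_addCircle {T : ℝ} (hT : T ≠ 0) :
    Nonempty (OnePoint ℝ ≃ₜ AddCircle T) := by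
  let e : EuclideanSpace ℝ (Fin 2) ≃ₗᵢ[ℝ] ℂ := Complex.orthonormalBasisOneI.repr.symm
  have hsphere : Metric.sphere (0 : EuclideanSpace ℝ (Fin 2)) 1 =
      e ⁻¹' Metric.sphere (0 : ℂ) 1 := by simp
  exact ⟨(onePointEquivSphereOfFinrankEq (by simp)).trans <|
    (e.toHomeomorph.sets hsphere).trans (AddCircle.homeomorphCircle hT).symm⟩

theorem exists_homeomorph_onePoint_apply_infty_eq {S : Type*} [TopologicalSpace S] {T : ℝ}
    (hT : T ≠ 0) (k : S ≃ₜ AddCircle T) (q : S) :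
    ∃ φ : OnePoint ℝ ≃ₜ S, φ OnePoint.infty = q := by
  obtain ⟨ψ⟩ := nonempty_homeomorph_onePoint_addCircle hT
  refine ⟨ψ.trans ((Homeomorph.addRight (k q - ψ OnePoint.infty)).trans k.symm), ?_⟩
  simp

end OnePointExtension

section MonotoneCollapse

theorem nonempty_orderIso_of_countable_of_dense {α β : Type*} [LinearOrder α] [TopologicalSpace α]
    [OrderTopology α] [DenselyOrdered α] [NoMinOrder α] [NoMaxOrder α] [Nonempty α]
    [LinearOrder β] [Countable β] [DenselyOrdered β] [NoMinOrder β] [NoMaxOrder β] [Nonempty β]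
    {s : Set α} (hc : s.Countable) (hs : Dense s) : Nonempty (s ≃o β) := by
  have : Countable s := hc.to_subtype
  have : Nonempty s := hs.nonempty.to_subtype
  have : DenselyOrdered s := ⟨fun x y hxy =>
    let ⟨z, hz, hz'⟩ := hs.exists_between (Subtype.coe_lt_coe.2 hxy)
    ⟨⟨z, hz⟩, hz'⟩⟩
  have : NoMinOrder s := ⟨fun x =>
    let ⟨y, hy, hyx⟩ := hs.exists_lt (x : α)
    ⟨⟨y, hy⟩, hyx⟩⟩
  have : NoMaxOrder s := ⟨fun x =>
    let ⟨y, hy, hxy⟩ := hs.exists_gt (x : α)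
    ⟨⟨y, hy⟩, hxy⟩⟩
  exact Order.iso_of_countable_dense s β

theorem exists_continuous_monotone_extension {α β : Type*} [LinearOrder α] [TopologicalSpace α]
    [OrderTopology α] [NoMinOrder α] [NoMaxOrder α] [ConditionallyCompleteLinearOrder β]
    [TopologicalSpace β] [OrderTopology β] [DenselyOrdered β] {D : Set α} (hD : Dense D)
    {f : D → β} (hf : Monotone f) (hrange : DenseRange f) :
    ∃ h : α → β, Continuous h ∧ Monotone h ∧ ∀ d : D, h d = f d := by
  let h : α → β := fun t => sSup (f '' {d | (d : α) ≤ t})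
  have hne : ∀ t, (f '' {d | (d : α) ≤ t}).Nonempty := fun t =>
    let ⟨d, hd, hdt⟩ := hD.exists_lt t
    ⟨_, ⟨d, hd⟩, hdt.le, rfl⟩
  have hbdd : ∀ t, BddAbove (f '' {d | (d : α) ≤ t}) := fun t => by
    obtain ⟨u, hu, htu⟩ := hD.exists_gt t
    exact ⟨f ⟨u, hu⟩, forall_mem_image.2 fun d hd => hf (hd.trans htu.le)⟩
  have hmono : Monotone h := fun s t hst =>
    csSup_le_csSup (hbdd t) (hne s) (image_mono fun d hd => le_trans hd hst)
  have hext : ∀ d : D, h d = f d := fun d =>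
    IsGreatest.csSup_eq ⟨⟨d, le_refl (d : α), rfl⟩, forall_mem_image.2 fun _ hd' => hf hd'⟩
  exact ⟨h, hmono.continuous_of_denseRange
    (hrange.mono (range_subset_iff.2 fun d => ⟨_, hext d⟩)), hmono, hext⟩

theorem tendsto_atTop_and_atBot_of_monotone_of_denseRange {α β : Type*} [Preorder α]
    [LinearOrder β] [TopologicalSpace β] [OrderTopology β] [NoMinOrder β] [NoMaxOrder β]
    {h : α → β} (hmono : Monotone h) (hdense : DenseRange h) :
    Tendsto h atTop atTop ∧ Tendsto h atBot atBot := by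
  refine ⟨tendsto_atTop_atTop_of_monotone hmono fun b => ?_,
    tendsto_atBot_atBot_of_monotone hmono fun b => ?_⟩
  · obtain ⟨_, ⟨a, rfl⟩, ha⟩ := Dense.exists_gt hdense b
    exact ⟨a, ha.le⟩
  · obtain ⟨_, ⟨a, rfl⟩, ha⟩ := Dense.exists_lt hdense b
    exact ⟨a, ha.le⟩

theorem isProperMap_of_monotone_of_denseRange {h : ℝ → ℝ} (hcont : Continuous h)
    (hmono : Monotone h) (hdense : DenseRange h) : IsProperMap h := by
  obtain ⟨htop, hbot⟩ := tendsto_atTop_and_atBot_of_monotone_of_denseRange hmono hdense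
  refine isProperMap_iff_tendsto_cocompact.2 ⟨hcont, ?_⟩
  rw [cocompact_eq_atBot_atTop]
  exact hbot.sup_sup htop

theorem exists_monotone_collapse {N Q : Set ℝ} (hN : N.Countable) (hQ : Q.Countable)
    (hQd : Dense Q) :
    ∃ h : ℝ → ℝ, IsProperMap h ∧ Monotone h ∧ Function.Surjective h ∧
      (∀ t ∈ Q, (h ⁻¹' {t}).Nontrivial) ∧ ∀ t ∉ Q, ∃ s ∉ N, h ⁻¹' {t} = {s} := by
  -- `D ⊇ N` is order isomorphic to `Q ×ₗ ℚ`, whose projection to `Q` has nontrivial fibers.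
  let D : Set ℝ := N ∪ range ((↑) : ℚ → ℝ)
  have hD : Dense D := Rat.denseRange_cast.mono subset_union_right
  have : Countable Q := hQ.to_subtype
  have : Nonempty Q := hQd.nonempty.to_subtype
  have : Countable (Q ×ₗ ℚ) := inferInstanceAs (Countable (Q × ℚ))
  obtain ⟨φ⟩ := nonempty_orderIso_of_countable_of_dense (β := Q ×ₗ ℚ)
    (hN.union (countable_range _)) hD
  let π : D → ℝ := fun d => ((ofLex (φ d)).1 : ℝ)
  have hπ : Monotone π := fun a b hab =>
    Subtype.coe_le_coe.2 (Prod.Lex.monotone_fst _ _ (φ.monotone hab))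
  have hπQ : ∀ (q : Q) (r : ℚ), π (φ.symm (toLex (q, r))) = q := fun q r => by simp [π]
  have hrange : DenseRange π := hQd.mono fun q hq => ⟨_, hπQ ⟨q, hq⟩ 0⟩
  obtain ⟨h, hcont, hmono, hext⟩ := exists_continuous_monotone_extension hD hπ hrange
  have hdense : DenseRange h := hrange.mono (range_subset_iff.2 fun d => ⟨_, hext d⟩)
  obtain ⟨htop, hbot⟩ := tendsto_atTop_and_atBot_of_monotone_of_denseRange hmono hdense
  have hsurj : Function.Surjective h := hcont.surjective htop hbot
  refine ⟨h, isProperMap_of_monotone_of_denseRange hcont hmono hdense, hmono, hsurj,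
    fun t ht => ?_, fun t ht => ?_⟩
  · refine ⟨φ.symm (toLex (⟨t, ht⟩, 0)), ?_, φ.symm (toLex (⟨t, ht⟩, 1)), ?_, ?_⟩
    · exact (hext _).trans (hπQ _ _)
    · exact (hext _).trans (hπQ _ _)
    · exact fun heq => by simpa using φ.symm.injective (Subtype.ext heq)
  · have hmiss : ∀ d ∈ D, h d ≠ t := fun d hd hdt =>
      ht (hdt ▸ hext ⟨d, hd⟩ ▸ (ofLex (φ ⟨d, hd⟩)).1.2)
    have hinj : ∀ s s', h s = t → h s' = t → s' ≤ s := fun s s' hs hs' => by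
      by_contra! hlt
      obtain ⟨q, hsq, hqs'⟩ := exists_rat_btwn hlt
      exact hmiss q (.inr ⟨q, rfl⟩)
        (((hmono hqs'.le).trans_eq hs').antisymm (hs.symm.trans_le (hmono hsq.le)))
    obtain ⟨s, hs⟩ := hsurj t
    exact ⟨s, fun hsN => hmiss s (.inl hsN) hs,
      eq_singleton_iff_unique_mem.2 ⟨hs, fun s' hs' => (hinj s s' hs hs').antisymm
        (hinj s' s hs' hs)⟩⟩

end MonotoneCollapse

/-- A family of points `point r` of a set `carrier`, indexed by `r : ℚ`, each of which separates
`carrier` into a left and a right part, such that the left parts increase with `r`. The regions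
between two points of the chain do not accumulate outside `carrier`, and no point of the chain is
a cut point of the ambient space. -/
structure SeparatingChain (X : Type*) [TopologicalSpace X] where
  carrier : Set X
  point : ℚ → X
  left : ℚ → Set X
  right : ℚ → Set X
  isOpen_left : ∀ r, IsOpen (left r)
  isOpen_right : ∀ r, IsOpen (right r)
  disjoint : ∀ r, Disjoint (left r) (right r)
  left_union_right : ∀ r, left r ∪ right r = carrier \ {point r}
  insert_left_subset : ∀ {r r'}, r < r' → insert (point r) (left r) ⊆ left r'
  closure_subset : ∀ {r r'}, r < r' → closure (right r ∩ left r') ⊆ carrier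
  not_isCutPoint : ∀ r, ¬ IsCutPoint (point r)

namespace SeparatingChain

section Order

variable {X : Type*} [TopologicalSpace X] (E : SeparatingChain X)

theorem left_subset (r : ℚ) : E.left r ⊆ E.carrier := fun _ hp =>
  ((E.left_union_right r).subset (.inl hp)).1

theorem right_subset (r : ℚ) : E.right r ⊆ E.carrier := fun _ hp =>
  ((E.left_union_right r).subset (.inr hp)).1

theorem point_notMem_left (r : ℚ) : E.point r ∉ E.left r := fun h =>
  ((E.left_union_right r).subset (.inl h)).2 rfl

theorem point_notMem_right (r : ℚ) : E.point r ∉ E.right r := fun h =>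
  ((E.left_union_right r).subset (.inr h)).2 rfl

theorem point_mem_left {r r' : ℚ} (h : r < r') : E.point r ∈ E.left r' :=
  E.insert_left_subset h (mem_insert _ _)

theorem left_mono : Monotone E.left :=
  monotone_iff_forall_lt.2 fun _ _ h => (subset_insert _ _).trans (E.insert_left_subset h)

theorem point_mem_carrier (r : ℚ) : E.point r ∈ E.carrier :=
  E.left_subset _ (E.point_mem_left (lt_add_one r))

theorem mem_right_of_notMem {p : X} {r : ℚ} (hp : p ∈ E.carrier)
    (h : p ∉ insert (E.point r) (E.left r)) : p ∈ E.right r :=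
  ((E.left_union_right r).superset ⟨hp, fun heq => h (.inl heq)⟩).resolve_left fun hl => h (.inr hl)

theorem insert_right_subset {r r' : ℚ} (h : r < r') :
    insert (E.point r') (E.right r') ⊆ E.right r := fun _ hp =>
  E.mem_right_of_notMem (insert_subset (E.point_mem_carrier r') (E.right_subset r') hp) fun hl =>
    disjoint_left.1 (disjoint_insert_right.2 ⟨E.point_notMem_left r', E.disjoint r'⟩)
      (E.insert_left_subset h hl) hp

/-- The same chain traversed in the opposite direction. -/
def dual : SeparatingChain X where
  carrier := E.carrier
  point r := E.point (-r)
  left r := E.right (-r)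
  right r := E.left (-r)
  isOpen_left r := E.isOpen_right (-r)
  isOpen_right r := E.isOpen_left (-r)
  disjoint r := (E.disjoint (-r)).symm
  left_union_right r := (union_comm _ _).trans (E.left_union_right (-r))
  insert_left_subset h := E.insert_right_subset (neg_lt_neg h)
  closure_subset h := inter_comm (E.left _) (E.right _) ▸ E.closure_subset (neg_lt_neg h)
  not_isCutPoint r := E.not_isCutPoint (-r)

theorem right_anti : Antitone E.right :=
  antitone_iff_forall_lt.2 fun _ _ h => (subset_insert _ _).trans (E.insert_right_subset h)

theorem lt_of_mem_right_of_mem_left {p : X} {r r' : ℚ} (hr : p ∈ E.right r)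
    (hr' : p ∈ E.left r') : r < r' :=
  lt_of_not_ge fun hle => disjoint_left.1 (E.disjoint r) (E.left_mono hle hr') hr

end Order

section Between

variable {X : Type*} [TopologicalSpace X] (E : SeparatingChain X)

/-- The open part of the chain strictly between two of its points. -/
def between (r r' : ℚ) : Set X := E.right r ∩ E.left r'

/-- The part of the chain between two of its points, endpoints included. -/
def closedBetween (r r' : ℚ) : Set X := E.carrier \ (E.left r ∪ E.right r')

variable {E} {r r' : ℚ}

theorem isOpen_between : IsOpen (E.between r r') := (E.isOpen_right r).inter (E.isOpen_left r')

theorem closedBetween_eq (h : r < r') :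
    E.closedBetween r r' = insert (E.point r) (insert (E.point r') (E.between r r')) := by
  ext p
  have hpoint : E.point r ∉ E.right r' := disjoint_left.1 (E.disjoint r') (E.point_mem_left h)
  have hpoint' : E.point r' ∉ E.left r :=
    disjoint_right.1 (E.disjoint r) (E.insert_right_subset h (mem_insert _ _))
  constructor
  · rintro ⟨hp, hlr⟩
    rw [mem_union, not_or] at hlr
    by_cases hr : p = E.point r
    · exact .inl hr
    by_cases hr' : p = E.point r'
    · exact .inr (.inl hr')
    exact .inr (.inr ⟨((E.left_union_right r).superset ⟨hp, hr⟩).resolve_left hlr.1,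
      ((E.left_union_right r').superset ⟨hp, hr'⟩).resolve_right hlr.2⟩)
  · rintro (rfl | rfl | ⟨hr, hl⟩)
    · exact ⟨E.point_mem_carrier r, not_or.2 ⟨E.point_notMem_left r, hpoint⟩⟩
    · exact ⟨E.point_mem_carrier r', not_or.2 ⟨hpoint', E.point_notMem_right r'⟩⟩
    · exact ⟨E.left_subset r' hl, not_or.2 ⟨disjoint_right.1 (E.disjoint r) hr,
        disjoint_left.1 (E.disjoint r') hl⟩⟩

theorem closure_between_subset (h : r < r') :
    closure (E.between r r') ⊆ E.closedBetween r r' := fun _ hp =>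
  ⟨E.closure_subset h hp, not_or.2
    ⟨disjoint_right.1 (((E.disjoint r).mono_right inter_subset_left).closure_right
      (E.isOpen_left r)) hp,
    disjoint_right.1 (((E.disjoint r').symm.mono_right inter_subset_right).closure_right
      (E.isOpen_right r')) hp⟩⟩

theorem isClosed_closedBetween [T1Space X] (h : r < r') : IsClosed (E.closedBetween r r') := by
  have hcl : E.closedBetween r r' = insert (E.point r) (insert (E.point r')
      (closure (E.between r r'))) := by
    refine Subset.antisymm ?_ ?_
    · rw [closedBetween_eq h]
      exact insert_subset_insert (insert_subset_insert subset_closure)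
    · have hsub := (closedBetween_eq (E := E) h).superset
      exact insert_subset (hsub (mem_insert _ _)) (insert_subset
        (hsub (mem_insert_of_mem _ (mem_insert _ _))) (closure_between_subset h))
  rw [hcl]
  exact isClosed_singleton.union (isClosed_singleton.union isClosed_closure)

theorem point_ne (h : r < r') : E.point r ≠ E.point r' := fun heq =>
  E.point_notMem_left r' (heq ▸ E.point_mem_left h)

theorem isConnected_closedBetween (h : r < r') : IsConnected (E.closedBetween r r') := by
  obtain ⟨s, hrs, hsr'⟩ := exists_between h
  rw [closedBetween_eq h]
  refine isConnected_insert_insert_of_not_isCutPoint (E.not_isCutPoint r) (E.not_isCutPoint r')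
    (point_ne h) isOpen_between
    ⟨E.point s, E.insert_right_subset hrs (mem_insert _ _), E.point_mem_left hsr'⟩
    (fun hp => E.point_notMem_right r hp.1) (fun hp => E.point_notMem_left r' hp.2) ?_
  exact (closure_between_subset h).trans_eq (closedBetween_eq h)

theorem isConnected_compl_between [T1Space X] [ConnectedSpace X] :
    IsConnected (E.between r r')ᶜ := by
  rcases lt_or_ge r r' with h | h
  · have heq : insert (E.point r) (insert (E.point r') (E.closedBetween r r')ᶜ) =
        (E.between r r')ᶜ := by
      have hr : E.point r ∉ E.between r r' := fun hp => E.point_notMem_right r hp.1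
      have hr' : E.point r' ∉ E.between r r' := fun hp => E.point_notMem_left r' hp.2
      rw [closedBetween_eq h]
      grind
    have hmem : E.point r ∈ E.closedBetween r r' ∧ E.point r' ∈ E.closedBetween r r' := by
      simp [closedBetween_eq h]
    rw [← heq]
    refine isConnected_insert_insert_of_not_isCutPoint (E.not_isCutPoint r) (E.not_isCutPoint r')
      (point_ne h) (isClosed_closedBetween h).isOpen_compl
      ⟨E.point (r - 1), fun hp => hp.2 (.inl (E.point_mem_left (sub_one_lt r)))⟩
      (not_not.2 hmem.1) (not_not.2 hmem.2) ?_
    rw [heq]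
    exact closure_minimal (compl_subset_compl.2 (subset_closure.trans (closure_between_subset h)))
      isOpen_between.isClosed_compl
  · have hempty : E.between r r' = ∅ := eq_empty_of_forall_notMem fun _ hp =>
      (E.lt_of_mem_right_of_mem_left hp.1 hp.2).not_ge h
    rw [hempty, compl_empty]
    exact isConnected_univ

end Between

section Region

variable {X : Type*} [TopologicalSpace X] (E : SeparatingChain X)

/-- The union of all regions between two points of the chain. -/
def region : Set X := (⋃ r, E.right r) ∩ ⋃ r, E.left r

/-- The part of the chain lying to the left of the real number `t`. -/
def leftOf (t : ℝ) : Set X := ⋃ (r : ℚ) (_ : (r : ℝ) < t), E.left r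

/-- The part of the chain lying to the right of the real number `t`. -/
def rightOf (t : ℝ) : Set X := ⋃ (r : ℚ) (_ : t < (r : ℝ)), E.right r

variable {E}

theorem isOpen_region : IsOpen E.region :=
  (isOpen_iUnion E.isOpen_right).inter (isOpen_iUnion E.isOpen_left)

theorem region_subset_carrier : E.region ⊆ E.carrier :=
  inter_subset_left.trans (iUnion_subset E.right_subset)

theorem isOpen_leftOf (t : ℝ) : IsOpen (E.leftOf t) := isOpen_biUnion fun r _ => E.isOpen_left r

theorem isOpen_rightOf (t : ℝ) : IsOpen (E.rightOf t) := isOpen_biUnion fun r _ => E.isOpen_right r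

theorem mem_leftOf {t : ℝ} {p : X} : p ∈ E.leftOf t ↔ ∃ r : ℚ, (r : ℝ) < t ∧ p ∈ E.left r := by
  simp only [leftOf, mem_iUnion, exists_prop]

theorem mem_rightOf {t : ℝ} {p : X} : p ∈ E.rightOf t ↔ ∃ r : ℚ, t < r ∧ p ∈ E.right r := by
  simp only [rightOf, mem_iUnion, exists_prop]

theorem dual_region : E.dual.region = E.region := by
  simp only [region, dual]
  rw [neg_surjective.iUnion_comp, neg_surjective.iUnion_comp, inter_comm]

theorem dual_leftOf_neg (t : ℝ) : E.dual.leftOf (-t) = E.rightOf t := by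
  rw [rightOf, ← neg_surjective.iUnion_comp]
  simp only [leftOf, dual, Rat.cast_neg, lt_neg]

theorem isConnected_compl_region [T2Space X] [CompactSpace X] [ConnectedSpace X] :
    IsConnected E.regionᶜ := by
  have heq : E.regionᶜ = ⋂ i : ℚ × ℚ, (E.between i.1 i.2)ᶜ := by
    ext p
    simp only [region, between, mem_compl_iff, mem_inter_iff, mem_iUnion, mem_iInter, Prod.forall]
    exact ⟨fun h r r' hp => h ⟨⟨r, hp.1⟩, r', hp.2⟩, fun h ⟨⟨r, hr⟩, r', hr'⟩ => h r r' ⟨hr, hr'⟩⟩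
  rw [heq]
  refine isConnected_iInter_of_directed (fun i j => ⟨(min i.1 j.1, max i.2 j.2), ?_, ?_⟩)
    (fun i => isOpen_between.isClosed_compl.isCompact) fun i => isConnected_compl_between
  · exact compl_subset_compl.2 (inter_subset_inter (E.right_anti (min_le_left _ _))
      (E.left_mono (le_max_left _ _)))
  · exact compl_subset_compl.2 (inter_subset_inter (E.right_anti (min_le_right _ _))
      (E.left_mono (le_max_right _ _)))

theorem tendsto_point_of_mem_frontier_leftOf [LocallyConnectedSpace X] {t : ℝ} {q : X}
    (hq : q ∈ E.region) (hqt : q ∈ frontier (E.leftOf t)) :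
    Tendsto E.point (comap ((↑) : ℚ → ℝ) (𝓝[<] t)) (𝓝 q) := by
  rw [(isOpen_leftOf t).frontier_eq] at hqt
  intro V hV
  obtain ⟨V', hV'V, hV'o, hqV', hV'c⟩ := locallyConnectedSpace_iff_subsets_isOpen_isConnected.1
    ‹_› q (V ∩ E.region) (inter_mem hV (isOpen_region.mem_nhds hq))
  obtain ⟨p, hpV', hp⟩ := mem_closure_iff.1 hqt.1 V' hV'o hqV'
  obtain ⟨r₀, hr₀, hp⟩ := mem_leftOf.1 hp
  refine mem_map.2 (mem_of_superset (preimage_mem_comap (Ioo_mem_nhdsLT hr₀)) fun r hr => ?_)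
  have hr₀r : r₀ < r := by exact_mod_cast hr.1
  by_contra hrV
  have hcover : V' ⊆ E.left r ∪ E.right r := fun x hx => (E.left_union_right r).superset
    ⟨region_subset_carrier (hV'V hx).2, fun heq => hrV (mem_singleton_iff.1 heq ▸ (hV'V hx).1 :)⟩
  have hV'left : V' ⊆ E.left r := hV'c.isPreconnected.subset_left_of_subset_union
    (E.isOpen_left r) (E.isOpen_right r) (E.disjoint r) hcover ⟨p, hpV', E.left_mono hr₀r.le hp⟩
  exact hqt.2 (mem_leftOf.2 ⟨r, hr.2, hV'left hqV'⟩)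

theorem subsingleton_region_inter_frontier_leftOf [T2Space X] [LocallyConnectedSpace X] (t : ℝ) :
    (E.region ∩ frontier (E.leftOf t)).Subsingleton := by
  have : (comap ((↑) : ℚ → ℝ) (𝓝[<] t)).NeBot := comap_neBot fun s hs => by
    obtain ⟨u, hu, hus⟩ := (mem_nhdsLT_iff_exists_Ioo_subset).1 hs
    obtain ⟨r, hr⟩ := exists_rat_btwn (mem_Iio.1 hu)
    exact ⟨r, hus hr⟩
  exact fun p hp q hq => tendsto_nhds_unique (tendsto_point_of_mem_frontier_leftOf hp.1 hp.2)
    (tendsto_point_of_mem_frontier_leftOf hq.1 hq.2)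

theorem subsingleton_region_inter_frontier_rightOf [T2Space X] [LocallyConnectedSpace X] (t : ℝ) :
    (E.region ∩ frontier (E.rightOf t)).Subsingleton := by
  rw [← dual_region, ← dual_leftOf_neg]
  exact subsingleton_region_inter_frontier_leftOf (-t)

end Region

section Coord

variable {X : Type*} [TopologicalSpace X] (E : SeparatingChain X)

/-- The position of a point of `E.region` relative to the chain. Outside `E.region` the supremum
may be that of an empty or an unbounded set. -/
noncomputable def coord (p : X) : ℝ := sSup ((↑) '' {r : ℚ | p ∈ E.right r})

variable {E} {p : X} {t : ℝ}

theorem isLUB_coord (hp : p ∈ E.region) :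
    IsLUB (((↑) : ℚ → ℝ) '' {r : ℚ | p ∈ E.right r}) (E.coord p) := by
  obtain ⟨⟨s, hs⟩, ⟨s', hs'⟩⟩ := hp.imp mem_iUnion.1 mem_iUnion.1
  exact isLUB_csSup ⟨s, s, hs, rfl⟩ ⟨s', forall_mem_image.2 fun r hr => by
    exact_mod_cast (E.lt_of_mem_right_of_mem_left hr hs').le⟩

theorem lt_coord_iff (hp : p ∈ E.region) : t < E.coord p ↔ p ∈ E.rightOf t := by
  simp [lt_isLUB_iff (isLUB_coord hp), mem_rightOf, and_comm]

theorem coord_lt_iff (hp : p ∈ E.region) : E.coord p < t ↔ p ∈ E.leftOf t := by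
  rw [mem_leftOf]
  constructor
  · intro hlt
    obtain ⟨r, hpr, hrt⟩ := exists_rat_btwn hlt
    obtain ⟨r', hrr', hr't⟩ := exists_rat_btwn hrt
    refine ⟨r', hr't, E.insert_left_subset (Rat.cast_lt.1 hrr') ?_⟩
    by_contra hpl
    exact hpr.not_ge ((isLUB_coord hp).1
      ⟨r, E.mem_right_of_notMem (region_subset_carrier hp) hpl, rfl⟩)
  · rintro ⟨r, hrt, hpr⟩
    refine lt_of_le_of_lt ((isLUB_coord hp).2 (forall_mem_image.2 fun s hs => ?_)) hrt
    exact_mod_cast (E.lt_of_mem_right_of_mem_left hs hpr).le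

theorem continuousOn_coord : ContinuousOn E.coord E.region := fun p hp => by
  refine ContinuousAt.continuousWithinAt (tendsto_order.2 ⟨fun a ha => ?_, fun a ha => ?_⟩)
  · filter_upwards [(isOpen_rightOf a).mem_nhds ((lt_coord_iff hp).1 ha),
      isOpen_region.mem_nhds hp] with q hqa hq
    exact (lt_coord_iff hq).2 hqa
  · filter_upwards [(isOpen_leftOf a).mem_nhds ((coord_lt_iff hp).1 ha),
      isOpen_region.mem_nhds hp] with q hqa hq
    exact (coord_lt_iff hq).2 hqa

theorem carrier_diff_subset_region (s s' : ℝ) :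
    E.carrier \ (E.leftOf s ∪ E.rightOf s') ⊆ E.region := by
  rintro p ⟨hp, hps⟩
  rw [mem_union, not_or, mem_leftOf, mem_rightOf] at hps
  push Not at hps
  obtain ⟨r, hr⟩ := exists_rat_lt s
  obtain ⟨r', hr'⟩ := exists_rat_gt s'
  refine ⟨mem_iUnion.2 ⟨r - 1, E.mem_right_of_notMem hp fun h => hps.1 r hr ?_⟩,
    mem_iUnion.2 ⟨r' + 1, E.insert_left_subset (lt_add_one r') ?_⟩⟩
  · exact E.insert_left_subset (sub_one_lt r) h
  · by_contra h
    exact hps.2 r' hr' (E.mem_right_of_notMem hp h)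

theorem region_inter_coord_preimage_Icc (s s' : ℝ) :
    E.region ∩ E.coord ⁻¹' Icc s s' =
      ⋂ i : {i : ℚ × ℚ // (i.1 : ℝ) < s ∧ s' < (i.2 : ℝ)}, E.closedBetween i.1.1 i.1.2 := by
  have hIcc : E.region ∩ E.coord ⁻¹' Icc s s' = E.carrier \ (E.leftOf s ∪ E.rightOf s') := by
    ext p
    constructor
    · rintro ⟨hp, hs, hs'⟩
      exact ⟨region_subset_carrier hp, not_or.2 ⟨fun h => ((coord_lt_iff hp).2 h).not_ge hs,
        fun h => ((lt_coord_iff hp).2 h).not_ge hs'⟩⟩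
    · intro hp
      have hpr := carrier_diff_subset_region s s' hp
      exact ⟨hpr, not_lt.1 fun h => hp.2 (.inl ((coord_lt_iff hpr).1 h)),
        not_lt.1 fun h => hp.2 (.inr ((lt_coord_iff hpr).1 h))⟩
  obtain ⟨r, hr⟩ := exists_rat_lt s
  obtain ⟨r', hr'⟩ := exists_rat_gt s'
  rw [hIcc]
  ext p
  simp only [closedBetween, mem_iInter, Set.mem_sdiff, mem_union, mem_leftOf, mem_rightOf,
    Subtype.forall, Prod.forall, not_or, not_exists, not_and]
  exact ⟨fun h a b hab => ⟨h.1, h.2.1 a hab.1, h.2.2 b hab.2⟩, fun h =>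
    ⟨(h r r' ⟨hr, hr'⟩).1, fun a ha => (h a r' ⟨ha, hr'⟩).2.1, fun b hb => (h r b ⟨hr, hb⟩).2.2⟩⟩

theorem isClosed_region_inter_coord_preimage [T1Space X] {K : Set ℝ} (hK : IsCompact K) :
    IsClosed (E.region ∩ E.coord ⁻¹' K) := by
  rcases K.eq_empty_or_nonempty with rfl | hne
  · simp
  have hle : sInf K ≤ sSup K := csInf_le_csSup hne hK.bddBelow hK.bddAbove
  have hsub : K ⊆ Icc (sInf K) (sSup K) := hK.isBounded.subset_Icc_sInf_sSup
  have hclosed : IsClosed (E.region ∩ E.coord ⁻¹' Icc (sInf K) (sSup K)) := by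
    rw [region_inter_coord_preimage_Icc]
    exact isClosed_iInter fun i => isClosed_closedBetween
      (Rat.cast_lt.1 ((i.2.1.trans_le hle).trans i.2.2))
  rw [← inter_eq_right.2 hsub, preimage_inter, ← inter_assoc]
  exact (continuousOn_coord.mono inter_subset_left).preimage_isClosed_of_isClosed hclosed
    hK.isClosed

theorem isConnected_region_inter_coord_preimage [T2Space X] [CompactSpace X] {K : Set ℝ}
    (hK : IsCompact K) (hKc : IsConnected K) : IsConnected (E.region ∩ E.coord ⁻¹' K) := by
  have hle : sInf K ≤ sSup K := csInf_le_csSup hKc.nonempty hK.bddBelow hK.bddAbove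
  rw [eq_Icc_of_connected_compact hKc hK, region_inter_coord_preimage_Icc]
  have hlt : ∀ i : {i : ℚ × ℚ // (i.1 : ℝ) < sInf K ∧ sSup K < (i.2 : ℝ)}, i.1.1 < i.1.2 :=
    fun i => Rat.cast_lt.1 ((i.2.1.trans_le hle).trans i.2.2)
  obtain ⟨r, hr⟩ := exists_rat_lt (sInf K)
  obtain ⟨r', hr'⟩ := exists_rat_gt (sSup K)
  have : Nonempty {i : ℚ × ℚ // (i.1 : ℝ) < sInf K ∧ sSup K < (i.2 : ℝ)} := ⟨⟨(r, r'), hr, hr'⟩⟩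
  refine isConnected_iInter_of_directed
    (fun i j => ⟨⟨(max i.1.1 j.1.1, min i.1.2 j.1.2), ?_, ?_⟩, ?_, ?_⟩)
    (fun i => (isClosed_closedBetween (hlt i)).isCompact)
    fun i => isConnected_closedBetween (hlt i)
  · exact_mod_cast max_lt i.2.1 j.2.1
  · exact_mod_cast lt_min i.2.2 j.2.2
  · exact sdiff_subset_sdiff_right (union_subset_union (E.left_mono (le_max_left _ _))
      (E.right_anti (min_le_left _ _)))
  · exact sdiff_subset_sdiff_right (union_subset_union (E.left_mono (le_max_right _ _))
      (E.right_anti (min_le_right _ _)))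

theorem subset_frontier_of_interior_eq_empty
    (hempty : interior (E.region ∩ E.coord ⁻¹' {t}) = ∅) :
    E.coord ⁻¹' {t} ∩ E.region ⊆ frontier (E.leftOf t) ∪ frontier (E.rightOf t) := by
  rintro q ⟨rfl, hq⟩
  have hleft : q ∉ E.leftOf (E.coord q) := fun h => ((coord_lt_iff hq).2 h).false
  have hright : q ∉ E.rightOf (E.coord q) := fun h => ((lt_coord_iff hq).2 h).false
  have hcl : q ∈ closure (E.leftOf (E.coord q) ∪ E.rightOf (E.coord q)) := by
    refine mem_closure_iff.2 fun V hV hqV => ?_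
    by_contra hdisj
    have hsub : V ∩ E.region ⊆ E.region ∩ E.coord ⁻¹' {E.coord q} := fun p ⟨hpV, hp⟩ =>
      ⟨hp, by_contra fun hne => hdisj ⟨p, hpV, (lt_or_gt_of_ne hne).imp
        (coord_lt_iff hp).1 (lt_coord_iff hp).1⟩⟩
    exact hempty.subset (interior_maximal hsub (hV.inter isOpen_region) ⟨hqV, hq⟩)
  rw [closure_union] at hcl
  rw [(isOpen_leftOf _).frontier_eq, (isOpen_rightOf _).frontier_eq]
  exact hcl.imp (fun h => ⟨h, hleft⟩) fun h => ⟨h, hright⟩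

theorem countable_nontrivial_fiber [T2Space X] [CompactSpace X] [LocallyConnectedSpace X]
    [SecondCountableTopology X] :
    {t : ℝ | (E.region ∩ E.coord ⁻¹' {t}).Nontrivial}.Countable := by
  refine PairwiseDisjoint.countable_of_nonempty_interior
    (s := fun t : ℝ => E.region ∩ E.coord ⁻¹' {t}) (fun s _ t _ hst => ?_) fun t ht => ?_
  · exact disjoint_left.2 fun p hps hpt => hst (hps.2.symm.trans hpt.2)
  · by_contra hempty
    have hinf := (isConnected_region_inter_coord_preimage (E := E) isCompact_singleton
      (isConnected_singleton (x := t))).isPreconnected.infinite_of_nontrivial ht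
    have hfin := (subsingleton_region_inter_frontier_leftOf (E := E) t).finite.union
      (subsingleton_region_inter_frontier_rightOf (E := E) t).finite
    refine hinf (hfin.subset fun q hq => ?_)
    exact (subset_frontier_of_interior_eq_empty (not_nonempty_iff_eq_empty.1 hempty) hq.symm).imp
      (fun h => ⟨hq.1, h⟩) fun h => ⟨hq.1, h⟩

end Coord

theorem exists_monotone_map {X : Type*} [TopologicalSpace X] [T2Space X] [CompactSpace X]
    [ConnectedSpace X] [LocallyConnectedSpace X] [SecondCountableTopology X]
    (E : SeparatingChain X) (hnt : E.regionᶜ.Nontrivial) {Q : Set (OnePoint ℝ)}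
    (hQ : Q.Countable) (hQd : Dense Q) (hQi : OnePoint.infty ∈ Q) :
    ∃ p : X → OnePoint ℝ, Continuous p ∧ (∀ y, IsConnected (p ⁻¹' {y})) ∧
      ∀ y, (p ⁻¹' {y}).Nontrivial ↔ y ∈ Q := by
  obtain ⟨h, hproper, hmono, hsurj, hfiber, hfiber'⟩ := exists_monotone_collapse
    E.countable_nontrivial_fiber (hQ.preimage OnePoint.coe_injective)
    (hQd.preimage OnePoint.isOpenEmbedding_coe.isOpenMap)
  have hconn : ∀ t, IsConnected (h ⁻¹' {t}) := fun t =>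
    ⟨hsurj t, (ordConnected_singleton.preimage_mono hmono).isPreconnected⟩
  have hsurj' : SurjOn E.coord E.region univ := fun t _ =>
    (isConnected_region_inter_coord_preimage isCompact_singleton isConnected_singleton).nonempty
  refine ⟨extendInfty E.region (h ∘ E.coord), ?_, fun y => ?_, fun y => ?_⟩
  · refine continuous_extendInfty isOpen_region
      (hproper.continuous.comp_continuousOn continuousOn_coord) fun K _ hK => ?_
    exact isClosed_region_inter_coord_preimage (hproper.isCompact_preimage hK)
  · induction y using OnePoint.rec with
    | infty => exact extendInfty_preimage_infty E.region _ ▸ isConnected_compl_region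
    | coe t =>
      rw [extendInfty_preimage_coe, preimage_comp]
      exact isConnected_region_inter_coord_preimage
        (hproper.isCompact_preimage isCompact_singleton) (hconn t)
  · induction y using OnePoint.rec with
    | infty => exact iff_of_true (extendInfty_preimage_infty E.region _ ▸ hnt) hQi
    | coe t =>
      rw [extendInfty_preimage_coe, preimage_comp]
      by_cases ht : (t : OnePoint ℝ) ∈ Q
      · refine iff_of_true (nontrivial_of_image E.coord _ ?_) ht
        rw [image_inter_preimage, hsurj'.image_eq_of_mapsTo (mapsTo_univ _ _), univ_inter]
        exact hfiber t ht
      · obtain ⟨s, hs, heq⟩ := hfiber' t ht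
        exact iff_of_false (heq ▸ hs) ht

end SeparatingChain

section LeftAccumulation

variable {T : Type*} [LinearOrder T] [TopologicalSpace T]

theorem countable_of_forall_countable_inter_Iio [SecondCountableTopology T]
    (hIoi : ∀ a : T, IsOpen (Ioi a)) {Z : Set T} (hZ : ∀ z ∈ Z, (Z ∩ Iio z).Countable) :
    Z.Countable := by
  obtain ⟨D, hDc, hDd⟩ := TopologicalSpace.exists_countable_dense Z
  have hmax : {z ∈ Z | ∀ w ∈ Z, w ≤ z}.Subsingleton := fun x hx y hy =>
    le_antisymm (hy.2 x hx.1) (hx.2 y hy.1)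
  refine ((hDc.biUnion fun d _ => hZ d d.2).union hmax.countable).mono fun z hz => ?_
  by_cases hzmax : ∀ w ∈ Z, w ≤ z
  · exact .inr ⟨hz, hzmax⟩
  · push Not at hzmax
    obtain ⟨w, hw, hzw⟩ := hzmax
    obtain ⟨d, hd, hdD⟩ := hDd.inter_open_nonempty _ ((hIoi z).preimage continuous_subtype_val)
      ⟨⟨w, hw⟩, hzw⟩
    exact .inl (mem_biUnion hdD ⟨hz, hd⟩)

theorem countable_setOf_countable_nhds_inter_Iio [SecondCountableTopology T]
    (hIoi : ∀ a : T, IsOpen (Ioi a)) (C : Set T) :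
    {z ∈ C | ∃ V ∈ 𝓝 z, (C ∩ V ∩ Iio z).Countable}.Countable := by
  let Z : Set T → Set T := fun V => {z ∈ C ∩ V | (C ∩ V ∩ Iio z).Countable}
  have hZ : ∀ V, (Z V).Countable := fun V =>
    countable_of_forall_countable_inter_Iio hIoi fun z hz =>
      hz.2.mono (inter_subset_inter_left _ (sep_subset _ _))
  refine ((TopologicalSpace.countable_countableBasis T).biUnion fun V _ => hZ V).mono ?_
  rintro z ⟨hzC, V, hV, hc⟩
  obtain ⟨V', hV', hz, hsub⟩ := (TopologicalSpace.isBasis_countableBasis T).mem_nhds_iff.1 hV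
  exact mem_biUnion hV' ⟨⟨hzC, hz⟩, hc.mono (by gcongr)⟩

theorem exists_subset_forall_mem_closure_inter_Iio [SecondCountableTopology T]
    (hIoi : ∀ a : T, IsOpen (Ioi a)) {C : Set T} (hC : ¬ C.Countable) :
    ∃ G ⊆ C, G.Nonempty ∧ ∀ z ∈ G, z ∈ closure (G ∩ Iio z) := by
  have hbad := countable_setOf_countable_nhds_inter_Iio hIoi C
  set B := {z ∈ C | ∃ V ∈ 𝓝 z, (C ∩ V ∩ Iio z).Countable}
  refine ⟨C \ B, sdiff_subset, ?_, fun z hz => mem_closure_iff_nhds.2 fun V hV => ?_⟩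
  · rw [sdiff_nonempty]
    exact fun hsub => hC (hbad.mono hsub)
  · have hunc : ¬ (C ∩ V ∩ Iio z).Countable := fun hc => hz.2 ⟨hz.1, V, hV, hc⟩
    obtain ⟨c, ⟨⟨hcC, hcV⟩, hcz⟩, hcB⟩ := sdiff_nonempty.2 fun hsub => hunc (hbad.mono hsub)
    exact ⟨c, hcV, ⟨hcC, hcB⟩, hcz⟩

theorem exists_strictMono_rat_of_forall_mem_closure_inter_Iio (hIoi : ∀ a : T, IsOpen (Ioi a))
    {G W : Set T} (hG : ∀ z ∈ G, z ∈ closure (G ∩ Iio z)) (hW : IsOpen W) {c₀ z : T}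
    (hzG : z ∈ G) (hzW : z ∈ W) (hc₀z : c₀ < z) :
    ∃ f : ℚ → T, StrictMono f ∧ ∀ r, f r ∈ G ∩ W ∩ Ioo c₀ z := by
  have hbetween : ∀ c ∈ G ∩ W, c ≤ z → ∀ b < c, c₀ ≤ b → ∃ d ∈ G ∩ W ∩ Ioo c₀ z, b < d ∧ d < c := by
    intro c hc hcz b hbc hb
    obtain ⟨d, ⟨hdW, hbd⟩, hdG, hdc⟩ := mem_closure_iff.1 (hG c hc.1) (W ∩ Ioi b)
      (hW.inter (hIoi b)) ⟨hc.2, hbc⟩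
    exact ⟨d, ⟨⟨hdG, hdW⟩, hb.trans_lt hbd, hdc.trans_le hcz⟩, hbd, hdc⟩
  have : DenselyOrdered ↥(G ∩ W ∩ Ioo c₀ z) := ⟨fun b c hbc =>
    let ⟨d, hd, hbd, hdc⟩ := hbetween c c.2.1 c.2.2.2.le b hbc b.2.2.1.le
    ⟨⟨d, hd⟩, hbd, hdc⟩⟩
  have : Nontrivial ↥(G ∩ W ∩ Ioo c₀ z) := by
    obtain ⟨c, hc, hc₀c, hcz⟩ := hbetween z ⟨hzG, hzW⟩ le_rfl c₀ hc₀z le_rfl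
    obtain ⟨d, hd, hcd, -⟩ := hbetween z ⟨hzG, hzW⟩ le_rfl c hcz hc₀c.le
    exact ⟨⟨c, hc⟩, ⟨d, hd⟩, Subtype.coe_ne_coe.1 hcd.ne⟩
  obtain ⟨f⟩ := Order.embedding_from_countable_to_dense ℚ ↥(G ∩ W ∩ Ioo c₀ z)
  exact ⟨fun r => f r, fun _ _ hrs => f.strictMono hrs, fun r => (f r).2⟩

end LeftAccumulation

section Separators

variable {Y : Type*} [TopologicalSpace Y] {a b c c' : Y}

/-- The part of `Y \ {c}` on the side of `a`: the component of `a` in `Y \ {c}`. It is empty if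
`a = c`. -/
def nearSide (a c : Y) : Set Y :=
  connectedComponentIn {c}ᶜ a

/-- The part of `Y \ {c}` that is not on the side of `a`. -/
def farSide (a c : Y) : Set Y :=
  {c}ᶜ \ nearSide a c

/-- The points which separate `a` from `b`, in the sense that `a` and `b` lie in different
components of the complement. -/
def separators (a b : Y) : Set Y :=
  {c | a ≠ c ∧ b ∈ farSide a c}

theorem mem_nearSide_self (h : a ≠ c) : a ∈ nearSide a c :=
  mem_connectedComponentIn h

theorem notMem_nearSide_right : c ∉ nearSide a c := fun h =>
  connectedComponentIn_subset _ _ h rfl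

theorem nearSide_eq_of_mem (h : b ∈ nearSide a c) : nearSide a c = nearSide b c :=
  connectedComponentIn_eq h

theorem disjoint_nearSide_farSide : Disjoint (nearSide a c) (farSide a c) :=
  disjoint_sdiff_right

theorem nearSide_union_farSide : nearSide a c ∪ farSide a c = {c}ᶜ :=
  union_sdiff_cancel (connectedComponentIn_subset _ _)

theorem mem_nearSide_or_mem_farSide {p : Y} (h : p ≠ c) : p ∈ nearSide a c ∨ p ∈ farSide a c :=
  nearSide_union_farSide.symm.subset h

theorem farSide_nonempty (hc : IsCutPoint c) : (farSide a c).Nonempty := by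
  rw [farSide, sdiff_nonempty]
  intro hsub
  exact hc ((connectedComponentIn_subset _ _).antisymm hsub ▸ isPreconnected_connectedComponentIn)

section Open

variable [T1Space Y] [LocallyConnectedSpace Y]

theorem isOpen_nearSide : IsOpen (nearSide a c) :=
  isOpen_compl_singleton.connectedComponentIn

theorem isOpen_farSide : IsOpen (farSide a c) :=
  isOpen_iff_mem_nhds.2 fun _ hp =>
    mem_of_superset (isOpen_nearSide.mem_nhds (mem_nearSide_self hp.1)) fun _ hq =>
      ⟨connectedComponentIn_subset _ _ hq, fun hqa =>
        hp.2 (nearSide_eq_of_mem hqa ▸ nearSide_eq_of_mem hq ▸ mem_nearSide_self hp.1)⟩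

theorem disjoint_closure_nearSide_farSide : Disjoint (closure (nearSide a c)) (farSide a c) :=
  disjoint_nearSide_farSide.closure_left isOpen_farSide

theorem disjoint_nearSide_closure_farSide : Disjoint (nearSide a c) (closure (farSide a c)) :=
  disjoint_nearSide_farSide.closure_right isOpen_nearSide

theorem exists_not_countable_preimage_separators [SecondCountableTopology Y] {C : Set Y}
    (hC : ¬ C.Countable) (hcut : ∀ c ∈ C, IsCutPoint c) (a : Y) :
    ∃ b, ¬ ((↑) ⁻¹' C : Set (separators a b)).Countable := by
  obtain ⟨D, hDc, hDd⟩ := TopologicalSpace.exists_countable_dense Y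
  by_contra! hsep
  refine hC (((hDc.biUnion fun b _ => (hsep b).image (↑)).insert a).mono fun c hc => ?_)
  obtain ⟨b, hb, hbD⟩ := hDd.inter_open_nonempty _ isOpen_farSide
    (farSide_nonempty (a := a) (hcut c hc))
  exact (eq_or_ne c a).imp id fun hca => mem_biUnion hbD ⟨⟨c, hca.symm, hb⟩, hc, rfl⟩

variable [ConnectedSpace Y]

theorem mem_closure_nearSide (h : a ≠ c) : c ∈ closure (nearSide a c) := by
  by_contra hcl
  refine notMem_nearSide_right (isPreconnected_univ.subset_of_closure_inter_subset isOpen_nearSide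
    ⟨a, mem_univ a, mem_nearSide_self h⟩ (fun q hq => ?_) (mem_univ c))
  exact (mem_nearSide_or_mem_farSide (by rintro rfl; exact hcl hq.1)).resolve_right
    (disjoint_left.1 disjoint_closure_nearSide_farSide hq.1)

theorem insert_nearSide_subset (h : a ≠ c) (hc' : c' ∈ farSide a c) :
    insert c (nearSide a c) ⊆ nearSide a c' := by
  have hconn : IsPreconnected (insert c (nearSide a c)) :=
    isPreconnected_connectedComponentIn.subset_closure (subset_insert _ _)
      (insert_subset (mem_closure_nearSide h) subset_closure)
  refine hconn.subset_connectedComponentIn (.inr (mem_nearSide_self h)) ?_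
  rw [subset_compl_singleton_iff, mem_insert_iff, not_or]
  exact ⟨hc'.1, hc'.2⟩

theorem mem_nearSide_iff_mem_farSide (hc : c ∈ separators a b) (hc' : c' ∈ separators a b) :
    c ∈ nearSide a c' ↔ c' ∈ farSide a c := by
  refine ⟨fun h => ⟨fun heq => notMem_nearSide_right (mem_singleton_iff.1 heq ▸ h), fun h' => ?_⟩,
    fun h => insert_nearSide_subset hc.1 h (mem_insert _ _)⟩
  -- Otherwise `c'` is on the far side of `c` seen from `b`, so `c` would join `a` to `b` off `c'`.
  have hb : c' ∈ farSide b c := ⟨connectedComponentIn_subset _ _ h', fun hb =>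
    hc.2.2 (nearSide_eq_of_mem h' ▸ nearSide_eq_of_mem hb ▸ mem_nearSide_self hc.2.1)⟩
  have hcb : c ∈ nearSide b c' := insert_nearSide_subset hc.2.1 hb (mem_insert _ _)
  exact hc'.2.2 (nearSide_eq_of_mem h ▸ nearSide_eq_of_mem hcb ▸ mem_nearSide_self hc'.2.1)

end Open

section Order

variable [T1Space Y] [LocallyConnectedSpace Y] [ConnectedSpace Y]

/-- The points separating `a` from `b`, ordered in the direction from `a` to `b`. -/
noncomputable abbrev separatorsLinearOrder (a b : Y) : LinearOrder (separators a b) :=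
  let r : separators a b → separators a b → Prop := fun c c' => (c : Y) ∈ nearSide a c'
  have : IsTrans _ r := ⟨fun _ c' c'' h h' => insert_nearSide_subset c'.2.1
    ((mem_nearSide_iff_mem_farSide c'.2 c''.2).1 h') (mem_insert_of_mem _ h)⟩
  have : Std.Trichotomous r := ⟨fun c c' h h' => by
    by_contra hne
    exact h ((mem_nearSide_iff_mem_farSide c.2 c'.2).2
      ⟨fun heq => hne (Subtype.ext heq.symm), h'⟩)⟩
  have : Std.Irrefl r := ⟨fun _ => notMem_nearSide_right⟩
  have : IsStrictOrder _ r := {}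
  have : IsStrictTotalOrder _ r := {}
  have := Classical.decRel r
  linearOrderOfSTO r

attribute [local instance] separatorsLinearOrder

theorem separators_lt_iff_mem_nearSide {c c' : separators a b} :
    c < c' ↔ (c : Y) ∈ nearSide a c' :=
  Iff.rfl

theorem separators_lt_iff_mem_farSide {c c' : separators a b} :
    c < c' ↔ (c' : Y) ∈ farSide a c :=
  separators_lt_iff_mem_nearSide.trans (mem_nearSide_iff_mem_farSide c.2 c'.2)

theorem insert_nearSide_subset_of_lt {c c' : separators a b} (h : c < c') :
    insert (c : Y) (nearSide a c) ⊆ nearSide a c' :=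
  insert_nearSide_subset c.2.1 (separators_lt_iff_mem_farSide.1 h)

theorem monotone_nearSide : Monotone fun c : separators a b => nearSide a (c : Y) :=
  monotone_iff_forall_lt.2 fun _ _ h =>
    (subset_insert _ _).trans (insert_nearSide_subset_of_lt h)

theorem isOpen_Ioi_separators (c : separators a b) : IsOpen (Ioi c) := by
  have : Ioi c = (↑) ⁻¹' farSide a (c : Y) := ext fun _ => separators_lt_iff_mem_farSide
  exact this ▸ isOpen_farSide.preimage continuous_subtype_val

end Order

section Accumulation

variable [T2Space Y] [LocallyConnectedSpace Y] [ConnectedSpace Y]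

attribute [local instance] separatorsLinearOrder

theorem nearSide_subset_biUnion_of_mem_closure {D : Set (separators a b)} {z : separators a b}
    (hDz : D ⊆ Iio z) (hz : z ∈ closure D) :
    nearSide a (z : Y) ⊆ ⋃ c ∈ D, nearSide a (c : Y) := by
  refine isPreconnected_connectedComponentIn.subset_of_closure_inter_subset
    (isOpen_biUnion fun _ _ => isOpen_nearSide) ?_ ?_
  · obtain ⟨c, hc⟩ := closure_nonempty_iff.1 ⟨z, hz⟩
    exact ⟨a, mem_nearSide_self z.2.1, mem_biUnion hc (mem_nearSide_self c.2.1)⟩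
  · rintro q ⟨hq, hqz⟩
    obtain ⟨V₁, V₂, hV₁, hV₂, hqV₁, hzV₂, hd⟩ := t2_separation (connectedComponentIn_subset _ _ hqz)
    obtain ⟨V, hVV₁, hVo, hqV, hVc⟩ := locallyConnectedSpace_iff_subsets_isOpen_isConnected.1 ‹_›
      q V₁ (hV₁.mem_nhds hqV₁)
    obtain ⟨p, hpV, hp⟩ := mem_closure_iff.1 hq V hVo hqV
    obtain ⟨c₁, hc₁, hpc₁⟩ := mem_iUnion₂.1 hp
    obtain ⟨c, ⟨hcV₂, hc₁c⟩, hcD⟩ := mem_closure_iff.1 hz (Subtype.val ⁻¹' V₂ ∩ Ioi c₁)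
      ((hV₂.preimage continuous_subtype_val).inter (isOpen_Ioi_separators c₁)) ⟨hzV₂, hDz hc₁⟩
    -- `V` joins `p ∈ nearSide a c` to `q` without meeting `c ∈ V₂`.
    have hVc' : V ⊆ nearSide p c :=
      hVc.isPreconnected.subset_connectedComponentIn hpV fun x hx hxc =>
        disjoint_left.1 hd (hVV₁ hx) (mem_singleton_iff.1 hxc ▸ hcV₂)
    exact mem_biUnion hcD (nearSide_eq_of_mem (monotone_nearSide (le_of_lt hc₁c) hpc₁) ▸ hVc' hqV)

theorem exists_frontier_inter_nearSide_subset {D : Set (separators a b)} {z : separators a b}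
    (hDz : D ⊆ Iio z) (hz : z ∈ closure D) {W : Set Y} (hWo : IsOpen W)
    (hWc : IsCompact (closure W)) (hzW : (z : Y) ∈ W) :
    ∃ c ∈ D, frontier W ∩ nearSide a z ⊆ nearSide a c := by
  have hfr : frontier W ∩ nearSide a z = frontier W ∩ (farSide a (z : Y))ᶜ := by
    refine Subset.antisymm (inter_subset_inter_right _ disjoint_nearSide_farSide.subset_compl_right)
      fun p hp => ⟨hp.1, ?_⟩
    rw [hWo.frontier_eq] at hp
    exact (mem_nearSide_or_mem_farSide (by rintro rfl; exact hp.1.2 hzW)).resolve_right hp.2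
  have hcomp : IsCompact (frontier W ∩ nearSide a z) := hfr ▸ hWc.of_isClosed_subset
    (isClosed_frontier.inter isOpen_farSide.isClosed_compl)
    (inter_subset_left.trans frontier_subset_closure)
  have : Nonempty D := (closure_nonempty_iff.1 ⟨z, hz⟩).to_subtype
  obtain ⟨c, hc⟩ := hcomp.elim_directed_cover (fun c : D => nearSide a (c : Y))
    (fun _ => isOpen_nearSide)
    (by simpa only [iUnion_coe_set] using
      inter_subset_right.trans (nearSide_subset_biUnion_of_mem_closure hDz hz))
    (monotone_nearSide.comp (Subtype.mono_coe (· ∈ D))).directed_le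
  exact ⟨c, c.2, hc⟩

theorem closure_farSide_inter_nearSide_subset {c₀ c c' z : separators a b} {W : Set Y}
    (hWo : IsOpen W) (hW : frontier W ∩ nearSide a z ⊆ nearSide a c₀) (hc : c₀ ≤ c) (hc' : c' ≤ z)
    (hc'W : (c' : Y) ∈ W) :
    closure (farSide a c ∩ W ∩ (nearSide a c' ∩ W)) ⊆ W := by
  intro q hq
  by_contra hqW
  have hq_frontier : q ∈ frontier W :=
    hWo.frontier_eq ▸ ⟨closure_mono (fun _ hp => hp.1.2) hq, hqW⟩
  have hq_far : q ∈ closure (farSide a (c : Y)) := closure_mono (fun _ hp => hp.1.1) hq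
  have hq_near : q ∈ closure (nearSide a (c' : Y)) := closure_mono (fun _ hp => hp.2.1) hq
  have hqc' : q ∈ nearSide a (c' : Y) :=
    (mem_nearSide_or_mem_farSide (by rintro rfl; exact hqW hc'W)).resolve_right
      (disjoint_left.1 disjoint_closure_nearSide_farSide hq_near)
  exact disjoint_right.1 disjoint_nearSide_closure_farSide hq_far
    (monotone_nearSide hc (hW ⟨hq_frontier, monotone_nearSide hc' hqc'⟩))

theorem exists_strictMono_rat_separators [LocallyCompactSpace Y] [SecondCountableTopology Y]
    {C : Set Y} (hC : ¬ ((↑) ⁻¹' C : Set (separators a b)).Countable) :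
    ∃ (W : Set Y) (f : ℚ → separators a b), IsOpen W ∧ IsCompact (closure W) ∧ StrictMono f ∧
      (∀ r, (f r : Y) ∈ C ∩ W) ∧
      ∀ r r', closure (farSide a (f r : Y) ∩ W ∩ (nearSide a (f r' : Y) ∩ W)) ⊆ W := by
  obtain ⟨G, hGC, ⟨z, hz⟩, hG⟩ :=
    exists_subset_forall_mem_closure_inter_Iio isOpen_Ioi_separators hC
  obtain ⟨W, hWo, hzW, hWc⟩ := exists_isOpen_mem_isCompact_closure (z : Y)
  obtain ⟨c₀, ⟨-, hc₀z⟩, hW⟩ :=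
    exists_frontier_inter_nearSide_subset inter_subset_right (hG z hz) hWo hWc hzW
  obtain ⟨f, hf, hfGW⟩ := exists_strictMono_rat_of_forall_mem_closure_inter_Iio
    isOpen_Ioi_separators hG (hWo.preimage continuous_subtype_val) hz hzW hc₀z
  exact ⟨W, f, hWo, hWc, hf, fun r => ⟨hGC (hfGW r).1.1, (hfGW r).1.2⟩, fun r r' =>
    closure_farSide_inter_nearSide_subset hWo hW (hfGW r).2.1.le (hfGW r').2.2.le (hfGW r').1.2⟩

theorem exists_separatingChain {X : Type*} [TopologicalSpace X] [T2Space X] {i : Y → X}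
    [LocallyCompactSpace Y] [SecondCountableTopology Y] (hi : IsOpenEmbedding i)
    {C : Set Y} (hC : ¬ ((↑) ⁻¹' C : Set (separators a b)).Countable)
    (hcut : ∀ c ∈ C, ¬ IsCutPoint (i c)) :
    ∃ E : SeparatingChain X, E.regionᶜ.Nontrivial := by
  obtain ⟨W, f, hWo, hWc, hf, hfCW, hcl⟩ := exists_strictMono_rat_separators hC
  let E : SeparatingChain X :=
    { carrier := i '' W
      point := fun r => i (f r)
      left := fun r => i '' (nearSide a (f r : Y) ∩ W)
      right := fun r => i '' (farSide a (f r : Y) ∩ W)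
      isOpen_left := fun r => hi.isOpenMap _ (isOpen_nearSide.inter hWo)
      isOpen_right := fun r => hi.isOpenMap _ (isOpen_farSide.inter hWo)
      disjoint := fun r => disjoint_image_of_injective hi.injective <|
        disjoint_nearSide_farSide.mono inter_subset_left inter_subset_left
      left_union_right := fun r => by
        rw [← image_union, ← union_inter_distrib_right, nearSide_union_farSide, inter_comm,
          ← sdiff_eq, image_sdiff hi.injective, image_singleton]
      insert_left_subset := fun {r r'} h => by
        have hsub := insert_subset_iff.1 (insert_nearSide_subset_of_lt (hf h))
        rw [← image_insert_eq]
        exact image_mono (insert_subset ⟨hsub.1, (hfCW r).2⟩ (inter_subset_inter_left _ hsub.2))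
      closure_subset := fun {r r'} _ => by
        rw [← image_inter hi.injective]
        refine (closure_minimal (image_mono subset_closure) ?_).trans (image_mono (hcl r r'))
        exact ((hWc.of_isClosed_subset isClosed_closure
          (closure_mono fun _ hp => hp.1.2)).image hi.continuous).isClosed
      not_isCutPoint := fun r => hcut _ (hfCW r).1 }
  have hright : ∀ r, i a ∉ E.right r := fun r h =>
    (hi.injective.mem_set_image.1 h).1.2 (mem_nearSide_self (f r).2.1)
  have hleft : ∀ r, i b ∉ E.left r := fun r h => (f r).2.2.2 (hi.injective.mem_set_image.1 h).1
  refine ⟨E, i a, fun h => ?_, i b, fun h => ?_, hi.injective.ne ?_⟩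
  · exact (mem_iUnion.1 h.1).elim hright
  · exact (mem_iUnion.1 h.2).elim hleft
  · exact disjoint_nearSide_farSide.ne_of_mem (mem_nearSide_self (f 0).2.1) (f 0).2.2

end Accumulation

end Separators

section LocalCutPoints

variable {X : Type*} [TopologicalSpace X]

theorem isPreconnected_sdiff_singleton_of_isOpen [T1Space X] {U O : Set X} {x : X}
    (hU : IsPreconnected U) (hO : IsOpen O) (hxO : x ∈ O) (hOU : O ⊆ U)
    (hOx : IsPreconnected (O \ {x})) : IsPreconnected (U \ {x}) := by
  rw [isPreconnected_iff_subset_of_disjoint]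
  intro u v hu hv hcov hdisj
  wlog hOu : O \ {x} ⊆ u generalizing u v
  · have hsub := sdiff_subset_sdiff_left (t := {x}) hOU
    have hOv : O \ {x} ⊆ v := ((isPreconnected_iff_subset_of_disjoint.1 hOx) u v hu hv
      (hsub.trans hcov) (subset_eq_empty (inter_subset_inter_left _ hsub) hdisj)).resolve_left hOu
    exact (this v u hv hu (by rwa [union_comm]) (by rwa [inter_comm v u]) hOv).symm
  have hUu : U ⊆ u ∪ O := by
    refine (isPreconnected_iff_subset_of_disjoint.1 hU _ _ (hu.union hO)
      (hv.sdiff (isClosed_singleton (x := x))) (fun y hy => ?_) ?_).resolve_right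
        fun h => (h (hOU hxO)).2 rfl
    · rcases eq_or_ne y x with rfl | hyx
      · exact .inl (.inr hxO)
      · exact (hcov ⟨hy, hyx⟩).imp .inl fun hyv => ⟨hyv, hyx⟩
    · refine eq_empty_of_forall_notMem fun y ⟨hyU, hyuO, hyv, hyx⟩ => ?_
      have hyu : y ∈ u := hyuO.elim id fun hyO => hOu ⟨hyO, hyx⟩
      exact hdisj.subset ⟨⟨hyU, hyx⟩, hyu, hyv⟩
  exact .inl fun y hy => (hUu hy.1).elim id fun hyO => hOu ⟨hyO, hy.2⟩

theorem isCutPoint_subtype_iff {O : Set X} {x : O} :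
    IsCutPoint x ↔ ¬ IsPreconnected (O \ {(x : X)}) := by
  rw [IsCutPoint, ← IsInducing.subtypeVal.isPreconnected_image, compl_eq_univ_sdiff,
    image_sdiff Subtype.val_injective, image_univ, Subtype.range_coe, image_singleton]

theorem exists_isOpen_isConnected_not_countable_isCutPoint [T1Space X] [LocallyConnectedSpace X]
    [SecondCountableTopology X] {C : Set X} (hC : ¬ C.Countable)
    (hloc : ∀ x ∈ C, IsLocalCutPoint x) :
    ∃ O : Set X, IsOpen O ∧ IsConnected O ∧ ¬ {x : O | (x : X) ∈ C ∧ IsCutPoint x}.Countable := by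
  obtain ⟨D, hDc, hDd⟩ := TopologicalSpace.exists_countable_dense X
  have hBc := TopologicalSpace.countable_countableBasis X
  by_contra! hcount
  refine hC ((hBc.biUnion fun V hV => (hDc.mono inter_subset_left).biUnion fun d hd =>
    (hcount (connectedComponentIn V d)
      (TopologicalSpace.isOpen_of_mem_countableBasis hV).connectedComponentIn
      (isConnected_connectedComponentIn_iff.2 (show d ∈ V from hd.2))).image (↑)).mono
        fun x hx => ?_)
  obtain ⟨U, hU, hUc, hcut⟩ := hloc x hx
  obtain ⟨V, hV, hxV, hVU⟩ := (TopologicalSpace.isBasis_countableBasis X).mem_nhds_iff.1 hU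
  have hVo := TopologicalSpace.isOpen_of_mem_countableBasis hV
  obtain ⟨d, hd, hdD⟩ := hDd.inter_open_nonempty _ (hVo.connectedComponentIn (x := x))
    ⟨x, mem_connectedComponentIn hxV⟩
  have hxd : x ∈ connectedComponentIn V d :=
    connectedComponentIn_eq hd ▸ mem_connectedComponentIn hxV
  refine mem_biUnion hV (mem_biUnion ⟨hdD, connectedComponentIn_subset _ _ hd⟩
    ⟨⟨x, hxd⟩, ⟨hx, isCutPoint_subtype_iff.2 fun h => hcut ?_⟩, rfl⟩)
  exact isPreconnected_sdiff_singleton_of_isOpen hUc.isPreconnected hVo.connectedComponentIn hxd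
    ((connectedComponentIn_subset _ _).trans hVU) h

theorem exists_separatingChain_of_not_countable [T2Space X] [LocallyCompactSpace X]
    [LocallyConnectedSpace X] [SecondCountableTopology X]
    (h : ¬ {x : X | IsLocalCutPoint x ∧ ¬ IsCutPoint x}.Countable) :
    ∃ E : SeparatingChain X, E.regionᶜ.Nontrivial := by
  obtain ⟨O, hO, hOc, hunc⟩ :=
    exists_isOpen_isConnected_not_countable_isCutPoint h fun _ hx => hx.1
  have : ConnectedSpace O := isConnected_iff_connectedSpace.1 hOc
  have : LocallyConnectedSpace O := hO.locallyConnectedSpace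
  have : LocallyCompactSpace O := hO.locallyCompactSpace
  obtain ⟨a⟩ := (inferInstance : Nonempty O)
  obtain ⟨b, hb⟩ := exists_not_countable_preimage_separators hunc (fun _ hx => hx.2) a
  exact exists_separatingChain hO.isOpenEmbedding_subtypeVal hb fun _ hc => hc.1.2

end LocalCutPoints

/-- Let `S` be a simple closed curve with a countable dense subset `Q`, and `X` a Peano
continuum with uncountably many local cut points which are not cut points. Then there is
a continuous surjection `p : X → S` whose fibers are continua, and whose fiber over `y`
is nondegenerate iff `y ∈ Q`. -/
theorem exists_monotone_map_onto_circle
    {S : Type*} [TopologicalSpace S] (hS : Nonempty (S ≃ₜ AddCircle (1 : ℝ)))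
    (Q : Set S) (hQc : Q.Countable) (hQd : Dense Q)
    {X : Type*} [MetricSpace X] [CompactSpace X] [ConnectedSpace X]
    [LocallyConnectedSpace X] [Nonempty X]
    (h : ¬ ({x : X | IsLocalCutPoint x ∧ ¬ IsCutPoint x}).Countable) :
    ∃ p : X → S, Continuous p ∧ Function.Surjective p ∧
      (∀ y, IsCompact (p ⁻¹' {y}) ∧ IsConnected (p ⁻¹' {y})) ∧
      (∀ y, (p ⁻¹' {y}).Nontrivial ↔ y ∈ Q) := by
  obtain ⟨k⟩ := hS
  have : T2Space S := k.symm.t2Space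
  have : Nonempty S := ⟨k.symm 0⟩
  obtain ⟨q, hq⟩ := hQd.nonempty
  obtain ⟨φ, hφ⟩ := exists_homeomorph_onePoint_apply_infty_eq one_ne_zero k q
  obtain ⟨E, hE⟩ := exists_separatingChain_of_not_countable h
  obtain ⟨p, hp, hconn, hfib⟩ := E.exists_monotone_map hE (hQc.preimage φ.injective)
    (hQd.preimage φ.isOpenMap) (show φ OnePoint.infty ∈ Q from hφ ▸ hq)
  have hpre : ∀ y, (φ ∘ p) ⁻¹' {y} = p ⁻¹' {φ.symm y} := fun y => by
    ext x
    simp [Homeomorph.eq_symm_apply]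
  have hcont : Continuous (φ ∘ p) := φ.continuous.comp hp
  refine ⟨φ ∘ p, hcont, fun y => (hpre y ▸ hconn (φ.symm y)).nonempty,
    fun y => ⟨(isClosed_singleton.preimage hcont).isCompact, hpre y ▸ hconn _⟩, fun y => ?_⟩
  rw [hpre, hfib, mem_preimage, φ.apply_symm_apply]
end

section
/- Let Y be a Peano continuum and let r : Y → A be a monotone retraction of Y onto a subset A ⊆ Y whose topological boundary in Y is finite. Let R ⊆ Y be a self-regenerating fractal and let R' be a connected component of A ∩ R whose interior in Y is nonempty. Then R' is a self-regenerating fractal. -/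
/-- A family `F` of self-maps of a metric space `X` is topologically contractive if for
every `ε > 0` there is `k` such that every composition of `k` maps from `F` has image of
diameter less than `ε`. -/
def TopContractive {X : Type*} [MetricSpace X] (F : Set (X → X)) : Prop :=
  ∀ ε > (0 : ℝ), ∃ k : ℕ, ∀ l : List (X → X), (∀ f ∈ l, f ∈ F) → l.length = k →
    Metric.diam (Set.range (l.foldr (· ∘ ·) id)) < ε

/-- A metric space `A` is a self-regenerating fractal if for every nonempty open
`U ⊆ A` there is a finite topologically contractive family of continuous self-maps of
`A`, each constant outside `U`, whose images cover `A`. -/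
def SelfRegenFractal (A : Type*) [MetricSpace A] : Prop :=
  ∀ U : Set A, IsOpen U → U.Nonempty →
    ∃ F : Set (A → A), F.Finite ∧ (∀ f ∈ F, Continuous f) ∧
      (∀ f ∈ F, ∀ x y, x ∉ U → y ∉ U → f x = f y) ∧
      TopContractive F ∧ (⋃ f ∈ F, Set.range f) = Set.univ

/-!
Self-regeneration passes from a compact space `X` to a connected retract `Z` as soon as the
retraction `ρ` maps all the points it moves into a finite set `E`. Indeed, given an open `V ⊆ Z`, a
map `f` that is constant outside `ρ ⁻¹' (V \ E)` does not distinguish `x` from `ρ x`, so `ρ`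
semiconjugates `f` to the map `ρ ∘ f` on `Z`, which is constant outside `V`.

For the component `R'`, such a retraction of `R` is `r` on `R ∩ r ⁻¹' R'` and constant elsewhere.
The points it moves go to that constant or to the finite frontier of `A`, since the monotone `r`
maps the complement of `A` into the frontier. To see that it is continuous, let `F` be a family
that is constant outside the interior of `R'` in `Y`. As `Y` is connected, each `r (f R)` with
`f ∈ F` is connected; as it differs from a subset of `A ∩ R` by finitely many points only, it is
contained in `R'` or disjoint from it. Hence finitely many closed sets `f R`, each contained in or
disjoint from `r ⁻¹' R'`, cover `R`.
-/

open Set Function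

theorem semiconj_foldr_comp_map {X Z : Type*} {ρ : X → Z} {φ : (Z → Z) → X → X}
    {l : List (Z → Z)} (h : ∀ g ∈ l, Semiconj ρ (φ g) g) :
    Semiconj ρ ((l.map φ).foldr (· ∘ ·) id) (l.foldr (· ∘ ·) id) := by
  induction l with
  | nil => exact Semiconj.id_right
  | cons g l ih =>
    exact (h g List.mem_cons_self).comp_right (ih fun g' hg' => h g' (List.mem_cons_of_mem g hg'))

theorem exists_pos_forall_diam_image_lt {X Z : Type*} [PseudoMetricSpace X] [BoundedSpace X]
    [PseudoMetricSpace Z] {ρ : X → Z} (hρ : UniformContinuous ρ) {ε : ℝ} (hε : 0 < ε) :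
    ∃ δ > 0, ∀ s : Set X, Metric.diam s < δ → Metric.diam (ρ '' s) < ε := by
  obtain ⟨δ, hδ, hρδ⟩ := Metric.uniformContinuous_iff.1 hρ (ε / 2) (half_pos hε)
  refine ⟨δ, hδ, fun s hs => (half_lt_self hε).trans_le' ?_⟩
  refine Metric.diam_le_of_forall_dist_le (half_pos hε).le ?_
  rintro _ ⟨x, hx, rfl⟩ _ ⟨y, hy, rfl⟩
  exact (hρδ ((Metric.dist_le_diam_of_mem (Bornology.IsBounded.all s) hx hy).trans_lt hs)).le

theorem TopContractive.of_semiconj {X Z : Type*} [MetricSpace X] [BoundedSpace X] [MetricSpace Z]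
    {F : Set (X → X)} {G : Set (Z → Z)} {ρ : X → Z} (hF : TopContractive F)
    (hρ : UniformContinuous ρ) (hρs : Surjective ρ) (hFG : ∀ g ∈ G, ∃ f ∈ F, Semiconj ρ f g) :
    TopContractive G := by
  intro ε hε
  have : Nonempty (X → X) := ⟨id⟩
  choose! φ hφF hφ using hFG
  obtain ⟨δ, hδ, hρδ⟩ := exists_pos_forall_diam_image_lt hρ hε
  obtain ⟨k, hk⟩ := hF δ hδ
  refine ⟨k, fun l hl hlk => ?_⟩
  have hsemi := semiconj_foldr_comp_map fun g hg => hφ g (hl g hg)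
  rw [← hρs.range_comp, ← hsemi.comp_eq, range_comp]
  refine hρδ _ (hk _ ?_ ((List.length_map φ).trans hlk))
  exact List.forall_mem_map.2 fun g hg => hφF g (hl g hg)

theorem SelfRegenFractal.of_subsingleton {Z : Type*} [MetricSpace Z] [Subsingleton Z] :
    SelfRegenFractal Z := by
  refine fun V _ _ => ⟨{id}, finite_singleton id, ?_, fun _ _ _ _ _ _ => Subsingleton.elim _ _,
    fun ε hε => ⟨0, fun l _ _ => ?_⟩, by simp⟩
  · rintro _ rfl
    exact continuous_id
  · rwa [Metric.diam_subsingleton subsingleton_of_subsingleton]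

theorem SelfRegenFractal.of_retract {X Z : Type*} [MetricSpace X] [CompactSpace X] [MetricSpace Z]
    [PreconnectedSpace Z] (hX : SelfRegenFractal X) {i : Z → X} {ρ : X → Z} (hi : Continuous i)
    (hρ : Continuous ρ) (hρi : LeftInverse ρ i) (hfin : (ρ '' {x | i (ρ x) ≠ x}).Finite) :
    SelfRegenFractal Z := by
  rcases subsingleton_or_nontrivial Z with _ | _
  · exact .of_subsingleton
  rintro V hV ⟨q, hq⟩
  have : ConnectedSpace Z := { toNonempty := ⟨q⟩ }
  set E := ρ '' {x | i (ρ x) ≠ x}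
  obtain ⟨z, hz⟩ := ((infinite_of_mem_nhds q (hV.mem_nhds hq)).sdiff hfin).nonempty
  obtain ⟨F, hFfin, hFcont, hFconst, hFcontr, hFcover⟩ := hX (ρ ⁻¹' (V \ E))
    ((hV.sdiff hfin.isClosed).preimage hρ) ⟨i z, by rwa [mem_preimage, hρi]⟩
  have hfρ : ∀ f ∈ F, ∀ x, f (i (ρ x)) = f x := by
    intro f hf x
    by_cases hx : i (ρ x) = x
    · rw [hx]
    · have hxE : ρ x ∈ E := mem_image_of_mem ρ hx
      exact hFconst f hf _ _ (fun h => h.2 (by rwa [hρi])) fun h => h.2 hxE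
  have hsemi : ∀ f ∈ F, Semiconj ρ f (ρ ∘ f ∘ i) := fun f hf x => congrArg ρ (hfρ f hf x).symm
  refine ⟨(fun f => ρ ∘ f ∘ i) '' F, hFfin.image _, ?_, ?_, ?_, ?_⟩
  · exact forall_mem_image.2 fun f hf => hρ.comp ((hFcont f hf).comp hi)
  · refine forall_mem_image.2 fun f hf x y hx hy => congrArg ρ (hFconst f hf _ _ ?_ ?_)
    · exact fun h => hx (hρi x ▸ h.1)
    · exact fun h => hy (hρi y ▸ h.1)
  · exact hFcontr.of_semiconj (CompactSpace.uniformContinuous_of_continuous hρ) hρi.surjective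
      (forall_mem_image.2 fun f hf => ⟨f, hf, hsemi f hf⟩)
  · rw [biUnion_image, eq_univ_iff_forall]
    intro w
    obtain ⟨f, hf, x, hx⟩ := mem_iUnion₂.1 (hFcover.symm ▸ mem_univ (i w))
    exact mem_iUnion₂.2 ⟨f, hf, ρ x, by rw [← hsemi f hf x, hx, hρi]⟩

theorem isPreconnected_range_of_const_outside {Y Z : Type*} [TopologicalSpace Y]
    [PreconnectedSpace Y] [TopologicalSpace Z] {R U : Set Y} (hR : IsClosed R) (hU : IsOpen U)
    (hUR : U ⊆ R) {f : R → Z} (hf : Continuous f)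
    (hconst : ∀ x y : R, (x : Y) ∉ U → (y : Y) ∉ U → f x = f y) :
    IsPreconnected (range f) := by
  refine isPreconnected_closed_iff.2 fun t t' ht ht' hcover hne hne' => ?_
  wlog htU : ∀ x : R, (x : Y) ∉ U → f x ∈ t generalizing t t'
  · push Not at htU
    obtain ⟨q, hqU, hqt⟩ := htU
    rw [inter_comm t]
    refine this t' t ht' ht (union_comm t t' ▸ hcover) hne' hne fun x hxU => ?_
    rw [hconst x q hxU hqU]
    exact (hcover (mem_range_self q)).resolve_left hqt
  have hclosed : ∀ {s}, IsClosed s → IsClosed (Subtype.val '' (f ⁻¹' s)) := fun hs =>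
    hR.isClosedEmbedding_subtypeVal.isClosedMap _ (hs.preimage hf)
  have hcoverY : univ ⊆ (Subtype.val '' (f ⁻¹' t) ∪ Uᶜ) ∪ Subtype.val '' (f ⁻¹' t') := by
    intro y _
    by_cases hyU : y ∈ U
    · exact (hcover (mem_range_self ⟨y, hUR hyU⟩)).imp
        (fun h => Or.inl ⟨_, h, rfl⟩) fun h => ⟨_, h, rfl⟩
    · exact Or.inl (Or.inr hyU)
  obtain ⟨_, ⟨x, rfl⟩, hxt⟩ := hne
  obtain ⟨_, ⟨x', rfl⟩, hxt'⟩ := hne'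
  obtain ⟨_, -, hyt, ⟨y, hyt', rfl⟩⟩ := isPreconnected_closed_iff.1 isPreconnected_univ _ _
    ((hclosed ht).union hU.isClosed_compl) (hclosed ht') hcoverY
    ⟨x, mem_univ _, Or.inl ⟨x, hxt, rfl⟩⟩ ⟨x', mem_univ _, x', hxt', rfl⟩
  refine ⟨f y, mem_range_self y, ?_, hyt'⟩
  rcases hyt with ⟨y', hy't, hy'⟩ | hyU
  · exact Subtype.ext hy' ▸ hy't
  · exact htU y hyU

theorem isPreconnected_subset_or_disjoint_connectedComponentIn {Y : Type*} [TopologicalSpace Y]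
    [T1Space Y] {S E T : Set Y} (hT : IsPreconnected T) (hS : IsClosed S) (hE : E.Finite)
    (hTSE : T ⊆ S ∪ E) (y : Y) :
    T ⊆ connectedComponentIn S y ∨ Disjoint T (connectedComponentIn S y) := by
  refine or_iff_not_imp_right.2 fun hdisj => ?_
  obtain ⟨p, hpT, hp⟩ := not_disjoint_iff.1 hdisj
  have hsplit : T ⊆ S ∨ T ⊆ E \ S :=
    isPreconnected_iff_subset_of_disjoint_closed.1 hT S (E \ S) hS (hE.subset sdiff_subset).isClosed
      (by rwa [union_sdiff_self]) (by rw [inter_sdiff_self, inter_empty])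
  have hTS : T ⊆ S := hsplit.resolve_right fun h => (h hpT).2 (connectedComponentIn_subset S y hp)
  rw [connectedComponentIn_eq hp]
  exact hT.subset_connectedComponentIn hpT hTS

theorem isClopen_of_finite_closed_cover {X ι : Type*} [TopologicalSpace X] {s : Set ι}
    (hs : s.Finite) {T : ι → Set X} (hT : ∀ j ∈ s, IsClosed (T j)) (hcover : ⋃ j ∈ s, T j = univ)
    {K : Set X} (hK : ∀ j ∈ s, T j ⊆ K ∨ Disjoint (T j) K) : IsClopen K := by
  have hclosed : ∀ L : Set X, (∀ j ∈ s, T j ⊆ L ∨ Disjoint (T j) L) → IsClosed L := by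
    intro L hL
    have hLeq : L = ⋃ j ∈ {j ∈ s | T j ⊆ L}, T j := by
      refine Subset.antisymm (fun x hx => ?_) (iUnion₂_subset fun j hj => hj.2)
      obtain ⟨j, hj, hxj⟩ := mem_iUnion₂.1 (hcover.symm ▸ mem_univ x)
      exact mem_iUnion₂.2
        ⟨j, ⟨hj, (hL j hj).resolve_right fun h => disjoint_left.1 h hxj hx⟩, hxj⟩
    rw [hLeq]
    exact (hs.sep _).isClosed_biUnion fun j hj => hT j hj.1
  refine ⟨hclosed K hK, isClosed_compl_iff.1 (hclosed Kᶜ fun j hj => ?_)⟩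
  rw [subset_compl_iff_disjoint_right, disjoint_compl_right_iff_subset]
  exact (hK j hj).symm

theorem exists_continuous_codRestrict_of_isClopen_preimage {X Y : Type*} [TopologicalSpace X]
    [TopologicalSpace Y] {g : X → Y} (hg : Continuous g) {S : Set Y} (hS : IsClopen (g ⁻¹' S))
    (q : S) :
    ∃ ρ : X → S, Continuous ρ ∧ (∀ x, g x ∈ S → (ρ x : Y) = g x) ∧ ∀ x, g x ∉ S → ρ x = q := by
  classical
  let φ : X → Y := (g ⁻¹' S).piecewise g fun _ => q
  have hφg : ∀ x, g x ∈ S → φ x = g x := fun x hx => piecewise_eq_of_mem _ _ _ hx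
  have hφq : ∀ x, g x ∉ S → φ x = q := fun x hx => piecewise_eq_of_notMem _ _ _ hx
  have hφS : ∀ x, φ x ∈ S := by
    intro x
    by_cases hx : g x ∈ S
    · rwa [hφg x hx]
    · exact hφq x hx ▸ q.2
  have hφ : Continuous φ :=
    hg.piecewise (fun x hx => absurd hx (hS.frontier_eq ▸ notMem_empty x)) continuous_const
  exact ⟨S.codRestrict φ hφS, hφ.codRestrict hφS, hφg, fun x hx => Subtype.ext (hφq x hx)⟩

section Retraction

variable {Y : Type*} {A : Set Y} {r : Y → Y}

theorem isClosed_of_retraction [TopologicalSpace Y] [T2Space Y] (hrc : Continuous r)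
    (hr_into : ∀ y, r y ∈ A) (hr_retr : ∀ a ∈ A, r a = a) : IsClosed A := by
  have hfix : A = {x | r x = x} :=
    Subset.antisymm hr_retr fun x (hx : r x = x) => hx ▸ hr_into x
  rw [hfix]
  exact isClosed_eq hrc continuous_id

theorem retraction_mem_frontier_of_isPreconnected_fiber [TopologicalSpace Y] [T1Space Y]
    (hr_into : ∀ y, r y ∈ A) (hr_retr : ∀ a ∈ A, r a = a)
    (hmono : ∀ a, IsPreconnected (r ⁻¹' {a})) {x : Y} (hx : x ∉ A) : r x ∈ frontier A := by
  refine ⟨subset_closure (hr_into x), fun hint => ?_⟩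
  have hfix : r (r x) = r x := hr_retr _ (hr_into x)
  obtain ⟨z, hzx, hzA, hzne⟩ := hmono (r x) (interior A) {r x}ᶜ isOpen_interior
    isOpen_compl_singleton
    (fun z _ => (eq_or_ne z (r x)).imp_left fun h : z = r x => h.symm ▸ hint)
    ⟨r x, hfix, hint⟩ ⟨x, rfl, fun h => hx (h ▸ hr_into x)⟩
  exact hzne ((hr_retr z (interior_subset hzA)).symm.trans hzx)

variable [MetricSpace Y] [PreconnectedSpace Y] {R : Set Y} {y : Y}

theorem isClopen_retraction_preimage_connectedComponentIn (hA : IsClosed A) (hrc : Continuous r)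
    (hr_retr : ∀ a ∈ A, r a = a) (hr_frontier : ∀ x ∉ A, r x ∈ frontier A)
    (hfr : (frontier A).Finite) (hRcomp : IsCompact R) (hR : SelfRegenFractal R)
    (hint : (interior (connectedComponentIn (A ∩ R) y)).Nonempty) :
    IsClopen ((fun x : R => r x) ⁻¹' connectedComponentIn (A ∩ R) y) := by
  have : CompactSpace R := isCompact_iff_compactSpace.1 hRcomp
  have hintR : interior (connectedComponentIn (A ∩ R) y) ⊆ R :=
    interior_subset.trans ((connectedComponentIn_subset _ _).trans inter_subset_right)
  obtain ⟨p, hp⟩ := hint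
  obtain ⟨F, hFfin, hFcont, hFconst, -, hFcover⟩ :=
    hR (Subtype.val ⁻¹' interior (connectedComponentIn (A ∩ R) y))
      (isOpen_interior.preimage continuous_subtype_val) ⟨⟨p, hintR hp⟩, hp⟩
  refine isClopen_of_finite_closed_cover hFfin
    (fun f hf => (isCompact_range (hFcont f hf)).isClosed) hFcover fun f hf => ?_
  have hrange : IsPreconnected (range fun x => r (f x)) :=
    isPreconnected_range_of_const_outside hRcomp.isClosed isOpen_interior hintR
      (hrc.comp (continuous_subtype_val.comp (hFcont f hf)))
      fun a b ha hb => by rw [hFconst f hf a b ha hb]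
  have hsub : (range fun x => r (f x)) ⊆ A ∩ R ∪ frontier A := by
    refine range_subset_iff.2 fun x => ?_
    by_cases hx : (f x : Y) ∈ A
    · rw [hr_retr _ hx]
      exact Or.inl ⟨hx, (f x).2⟩
    · exact Or.inr (hr_frontier _ hx)
  refine (isPreconnected_subset_or_disjoint_connectedComponentIn hrange
    (hA.inter hRcomp.isClosed) hfr hsub y).imp ?_ fun h => ?_
  · exact fun h => range_subset_iff.2 fun x => h (mem_range_self x)
  · exact disjoint_left.2 (forall_mem_range.2 fun x => disjoint_left.1 h (mem_range_self x))

theorem exists_retraction_onto_connectedComponentIn (hA : IsClosed A) (hrc : Continuous r)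
    (hr_retr : ∀ a ∈ A, r a = a) (hr_frontier : ∀ x ∉ A, r x ∈ frontier A)
    (hfr : (frontier A).Finite) (hRcomp : IsCompact R) (hR : SelfRegenFractal R)
    (hint : (interior (connectedComponentIn (A ∩ R) y)).Nonempty) :
    ∃ (i : connectedComponentIn (A ∩ R) y → R) (ρ : R → connectedComponentIn (A ∩ R) y),
      Continuous i ∧ Continuous ρ ∧ LeftInverse ρ i ∧ (ρ '' {x | i (ρ x) ≠ x}).Finite := by
  set C := connectedComponentIn (A ∩ R) y
  have hCsub : C ⊆ A ∩ R := connectedComponentIn_subset _ _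
  obtain ⟨q, hq⟩ := hint.mono interior_subset
  obtain ⟨ρ, hρ, hρr, hρq⟩ := exists_continuous_codRestrict_of_isClopen_preimage
    (hrc.comp continuous_subtype_val)
    (isClopen_retraction_preimage_connectedComponentIn hA hrc hr_retr hr_frontier hfr hRcomp hR
      hint) ⟨q, hq⟩
  have hCR : C ⊆ R := hCsub.trans inter_subset_right
  refine ⟨inclusion hCR, ρ, continuous_inclusion hCR, hρ, fun z => Subtype.ext ?_, ?_⟩
  · have hz : r z = z := hr_retr z (hCsub z.2).1
    exact (hρr (inclusion hCR z) (show r z ∈ C from hz.symm ▸ z.2)).trans hz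
  · refine ((hfr.insert q).preimage Subtype.val_injective.injOn).subset ?_
    rintro _ ⟨x, hmoved, rfl⟩
    by_cases hx : r x ∈ C
    · have hρx : (ρ x : Y) = r x := hρr x hx
      have hxA : (x : Y) ∉ A := fun h => hmoved (Subtype.ext (hρx.trans (hr_retr x h)))
      exact Or.inr (hρx ▸ hr_frontier x hxA)
    · exact Or.inl (congrArg Subtype.val (hρq x hx))

theorem component_of_retract_inter_selfRegenerating_is_selfRegenerating_general
    (hrc : Continuous r) (hr_into : ∀ y, r y ∈ A) (hr_retr : ∀ a ∈ A, r a = a)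
    (hr_frontier : ∀ x ∉ A, r x ∈ frontier A) (hfr : (frontier A).Finite) (hRcomp : IsCompact R)
    (hR : SelfRegenFractal R) (hint : (interior (connectedComponentIn (A ∩ R) y)).Nonempty) :
    IsCompact (connectedComponentIn (A ∩ R) y) ∧
      SelfRegenFractal (connectedComponentIn (A ∩ R) y) := by
  have hA : IsClosed A := isClosed_of_retraction hrc hr_into hr_retr
  have : CompactSpace R := isCompact_iff_compactSpace.1 hRcomp
  have : PreconnectedSpace (connectedComponentIn (A ∩ R) y) :=
    Subtype.preconnectedSpace isPreconnected_connectedComponentIn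
  obtain ⟨i, ρ, hi, hρ, hρi, hfin⟩ := exists_retraction_onto_connectedComponentIn hA hrc hr_retr
    hr_frontier hfr hRcomp hR hint
  exact ⟨isCompact_iff_compactSpace.2 (hρi.surjective.compactSpace hρ),
    hR.of_retract hi hρ hρi hfin⟩

end Retraction

/-- Let `Y` be a Peano continuum, `r : Y → Y` a monotone retraction onto `A ⊆ Y` with
finite boundary, `R ⊆ Y` a (compact) self-regenerating fractal, and `R'` a connected
component of `A ∩ R` with nonempty interior in `Y`. Then `R'` is a self-regenerating
fractal. -/
theorem component_of_retract_inter_selfRegenerating_is_selfRegenerating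
    {Y : Type*} [MetricSpace Y] [CompactSpace Y] [ConnectedSpace Y]
    [LocallyConnectedSpace Y] [Nonempty Y]
    (A : Set Y) (r : Y → Y)
    (hrc : Continuous r) (hr_into : ∀ y, r y ∈ A)
    (hr_retr : ∀ a ∈ A, r a = a)
    (hmono : ∀ a, IsPreconnected (r ⁻¹' {a}))
    (hfr : (frontier A).Finite)
    (R : Set Y) (hRcomp : IsCompact R) (hR : SelfRegenFractal R)
    (R' : Set Y) (y : Y) (hy : y ∈ A ∩ R)
    (hR' : R' = connectedComponentIn (A ∩ R) y)
    (hint : (interior R').Nonempty) :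
    IsCompact R' ∧ SelfRegenFractal R' := by
  subst hR'
  exact component_of_retract_inter_selfRegenerating_is_selfRegenerating_general hrc hr_into hr_retr
    (fun _ => retraction_mem_frontier_of_isPreconnected_fiber hr_into hr_retr hmono) hfr hRcomp hR
    hint
end
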